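/- arXiv:1408.3325 — 2 statements merged into one kernel-verified Lean document; each statement's English description precedes it below -/
import Mathlib

section
/- For every wheel W=(V,E_W) and every matching M=(V,E_M) on a common set V of n ≥ 4 vertices, there exists a RacSim drawing of W and M on an integer grid of size (⌊3n/2⌋−1)×(n+2) in which every edge of the wheel is drawn with at most two bends and every edge of the matching is drawn with no bends (as a single straight-line segment). -/
open SimpleGraph

/-- A polyline with `n` straight-line segments, given by its `n + 1` corner points. -/
structure Polyline where
  n : ℕ
  pts : Fin (n + 1) → ℝ × ℝ

namespace Polyline

/-- The first point of a polyline. -/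
def first (P : Polyline) : ℝ × ℝ := P.pts 0

/-- The last point of a polyline. -/
def last (P : Polyline) : ℝ × ℝ := P.pts (Fin.last P.n)

/-- The segments of a polyline, as ordered pairs of endpoints. -/
def segs (P : Polyline) : Set ((ℝ × ℝ) × (ℝ × ℝ)) :=
  {s | ∃ i : Fin P.n, s = (P.pts i.castSucc, P.pts i.succ)}

/-- The set of points covered by a polyline. -/
def curve (P : Polyline) : Set (ℝ × ℝ) :=
  ⋃ i : Fin P.n, segment ℝ (P.pts i.castSucc) (P.pts i.succ)

end Polyline

/-- Two segments are perpendicular: their direction vectors have zero dot product. -/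
def SegPerp (s t : (ℝ × ℝ) × (ℝ × ℝ)) : Prop :=
  (s.2.1 - s.1.1) * (t.2.1 - t.1.1) + (s.2.2 - s.1.2) * (t.2.2 - t.1.2) = 0

/-- Two segments cross: their relative interiors meet. -/
def SegCross (s t : (ℝ × ℝ) × (ℝ × ℝ)) : Prop :=
  (openSegment ℝ s.1 s.2 ∩ openSegment ℝ t.1 t.2).Nonempty

/-- A point has integer coordinates lying in `{1, …, a} × {1, …, b}`. -/
def OnGridPt (a b : ℤ) (p : ℝ × ℝ) : Prop :=
  ∃ x y : ℤ, p = ((x : ℝ), (y : ℝ)) ∧ 1 ≤ x ∧ x ≤ a ∧ 1 ≤ y ∧ y ≤ b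

/-- A simultaneous polyline drawing of the graphs `G 0, …, G (m - 1)` on a common
vertex set `V`: an injective placement of the vertices in the plane together with,
for each graph and each of its edges, a polyline joining the placements of the two
endpoints of the edge. -/
structure SimDrawing {V : Type} {m : ℕ} (G : Fin m → SimpleGraph V) where
  pos : V → ℝ × ℝ
  pos_injective : Function.Injective pos
  poly : Fin m → Sym2 V → Polyline
  joins : ∀ (i : Fin m) (a b : V), (G i).Adj a b →
    ((poly i s(a, b)).first = pos a ∧ (poly i s(a, b)).last = pos b) ∨
    ((poly i s(a, b)).first = pos b ∧ (poly i s(a, b)).last = pos a)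

namespace SimDrawing

variable {V : Type} {m : ℕ} {G : Fin m → SimpleGraph V} (D : SimDrawing G)

/-- (i) Each graph is drawn planar: the polylines of two distinct edges of the same
graph intersect only in points representing common endpoints. -/
def PlanarEach : Prop :=
  ∀ i : Fin m, ∀ e ∈ (G i).edgeSet, ∀ e' ∈ (G i).edgeSet, e ≠ e' →
    (D.poly i e).curve ∩ (D.poly i e').curve ⊆
      {p | ∃ v : V, v ∈ e ∧ v ∈ e' ∧ p = D.pos v}

/-- (ii) No two segments belonging to distinct edges overlap in more than one point. -/
def NoOverlaps : Prop :=
  ∀ i : Fin m, ∀ e ∈ (G i).edgeSet, ∀ j : Fin m, ∀ e' ∈ (G j).edgeSet,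
    (i ≠ j ∨ e ≠ e') →
      ∀ s ∈ (D.poly i e).segs, ∀ t ∈ (D.poly j e').segs,
        (segment ℝ s.1 s.2 ∩ segment ℝ t.1 t.2).Subsingleton

/-- (iii) Whenever segments of edges of two different graphs cross, they are
perpendicular at the crossing point. -/
def RightAngleCrossings : Prop :=
  ∀ i j : Fin m, i ≠ j → ∀ e ∈ (G i).edgeSet, ∀ e' ∈ (G j).edgeSet,
    ∀ s ∈ (D.poly i e).segs, ∀ t ∈ (D.poly j e').segs, SegCross s t → SegPerp s t

/-- A RacSim (RAC simultaneous) drawing: conditions (i), (ii) and (iii). -/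
def IsRacSim : Prop :=
  D.PlanarEach ∧ D.NoOverlaps ∧ D.RightAngleCrossings

/-- All vertex points and all corner points (hence all segment endpoints) of the
drawing lie on the integer grid `{1, …, a} × {1, …, b}`. -/
def OnGrid (a b : ℤ) : Prop :=
  (∀ v : V, OnGridPt a b (D.pos v)) ∧
    ∀ i : Fin m, ∀ e ∈ (G i).edgeSet, ∀ k : Fin ((D.poly i e).n + 1),
      OnGridPt a b ((D.poly i e).pts k)

/-- Every edge of the `i`-th graph is drawn with at most `k` bends, i.e. its
polyline consists of at most `k + 1` segments. -/
def BendsAtMost (i : Fin m) (k : ℕ) : Prop :=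
  ∀ e ∈ (G i).edgeSet, (D.poly i e).n ≤ k + 1

end SimDrawing

/-- The degree of a vertex of a graph. -/
noncomputable def vdeg {V : Type} (G : SimpleGraph V) (v : V) : ℕ := (G.neighborSet v).ncard

/-- Rim adjacency for a wheel on indices `1, …, n - 1` (index `0` is the center):
consecutive indices, or the wrap-around pair `{1, n - 1}`. -/
def RimAdj (n : ℕ) (a b : Fin n) : Prop :=
  (b.val = a.val + 1 ∨ a.val = b.val + 1) ∨
    (a.val = 1 ∧ b.val = n - 1) ∨ (b.val = 1 ∧ a.val = n - 1)

/-- `W` is a wheel on `n` vertices: under some labeling of the vertices by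
`Fin n`, vertex `0` is the center, adjacent to all other vertices, and the
remaining vertices form the rim cycle `1 → 2 → ⋯ → (n-1) → 1`. -/
def IsWheel {V : Type} (n : ℕ) (W : SimpleGraph V) : Prop :=
  ∃ f : Fin n ≃ V, ∀ a b : Fin n,
    W.Adj (f a) (f b) ↔
      (a.val = 0 ∧ b.val ≠ 0) ∨ (b.val = 0 ∧ a.val ≠ 0) ∨
      (a.val ≠ 0 ∧ b.val ≠ 0 ∧ RimAdj n a b)

/-- A matching on a vertex set: a graph in which every vertex has degree at most 1. -/
def IsMatchingGraph {V : Type} (M : SimpleGraph V) : Prop :=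
  ∀ v : V, vdeg M v ≤ 1

/-!
Put the center at the top and number the rim vertices `1, …, m` so that the partner of the center,
if there is one, is vertex `1`. Vertex `i` is placed in row `m + 3 - max i (σ i)`, where `σ i` is
its partner (or `i` itself): matched rim vertices share a row, distinct matching edges use distinct
rows, and so all matching edges not at the center are disjoint horizontal segments.

The columns increase with `i`. A spoke enters the column of its rim vertex right below the center
and descends vertically. A rim edge leaves both endpoints downwards, dropping by one row, and
changes height in a single column. The only slanted wheel segments thus lie between two consecutive
grid rows, where they cannot cross a horizontal matching segment, and all crossings occur on
vertical segments. Two consecutive rim edges may not both run below their common vertex, which is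
achieved by leaving a free column in every other gap: this is the `3n/2` in the width.

The matching edge at the center is the diagonal from `(1, m + 2)` to `(2, m + 3)` of a grid cell
whose interior no wheel edge enters.
-/

section Segments

variable {p q z : ℝ × ℝ}

lemma fst_mem_uIcc_of_mem_segment (hz : z ∈ segment ℝ p q) : z.1 ∈ Set.uIcc p.1 q.1 :=
  segment_eq_uIcc p.1 q.1 ▸ (Prod.segment_subset p q hz).1

lemma snd_mem_uIcc_of_mem_segment (hz : z ∈ segment ℝ p q) : z.2 ∈ Set.uIcc p.2 q.2 :=
  segment_eq_uIcc p.2 q.2 ▸ (Prod.segment_subset p q hz).2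

lemma fst_eq_of_mem_segment (hz : z ∈ segment ℝ p q) (hpq : p.1 = q.1) : z.1 = p.1 := by
  simpa [← hpq] using fst_mem_uIcc_of_mem_segment hz

lemma snd_eq_of_mem_segment (hz : z ∈ segment ℝ p q) (hpq : p.2 = q.2) : z.2 = p.2 := by
  simpa [← hpq] using snd_mem_uIcc_of_mem_segment hz

lemma snd_mem_Ioo_of_mem_openSegment (hz : z ∈ openSegment ℝ p q) (hpq : p.2 ≠ q.2) :
    z.2 ∈ Set.Ioo (min p.2 q.2) (max p.2 q.2) :=
  openSegment_eq_Ioo' hpq ▸ (Prod.openSegment_subset p q hz).2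

lemma cross_eq_of_mem_segment (hz : z ∈ segment ℝ p q) :
    (z.1 - p.1) * (q.2 - p.2) = (z.2 - p.2) * (q.1 - p.1) := by
  rw [segment_eq_image'] at hz
  obtain ⟨t, -, rfl⟩ := hz
  simp only [Prod.fst_add, Prod.snd_add, Prod.smul_fst, Prod.smul_snd, Prod.fst_sub, Prod.snd_sub,
    smul_eq_mul]
  ring

end Segments

/-- The conditions (ii) and (iii) of a RacSim drawing for a pair of segments of edges of different
graphs: they share at most one point, and a crossing is perpendicular. -/
def RacPair (s t : (ℝ × ℝ) × (ℝ × ℝ)) : Prop :=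
  (segment ℝ s.1 s.2 ∩ segment ℝ t.1 t.2).Subsingleton ∧ (SegCross s t → SegPerp s t)

section RacPair

variable {s t : (ℝ × ℝ) × (ℝ × ℝ)}

lemma SegCross.symm (h : SegCross s t) : SegCross t s := by
  rwa [SegCross, Set.inter_comm]

lemma SegPerp.symm (h : SegPerp s t) : SegPerp t s := by
  unfold SegPerp at *
  linarith

lemma RacPair.symm (h : RacPair s t) : RacPair t s :=
  ⟨Set.inter_comm _ _ ▸ h.1, fun hc => (h.2 hc.symm).symm⟩

lemma racPair_of_vertical_of_horizontal (hs : s.1.1 = s.2.1) (ht : t.1.2 = t.2.2) :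
    RacPair s t := by
  refine ⟨fun z hz w hw => Prod.ext ?_ ?_, fun _ => by simp [SegPerp, hs, ht]⟩
  · rw [fst_eq_of_mem_segment hz.1 hs, fst_eq_of_mem_segment hw.1 hs]
  · rw [snd_eq_of_mem_segment hz.2 ht, snd_eq_of_mem_segment hw.2 ht]

lemma racPair_of_horizontal_of_ne (hs : s.1.2 = s.2.2) (ht : t.1.2 = t.2.2) (hst : s.1.2 ≠ t.1.2) :
    RacPair s t := by
  have disjoint {z} (hzs : z ∈ segment ℝ s.1 s.2) (hzt : z ∈ segment ℝ t.1 t.2) : False :=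
    hst (by rw [← snd_eq_of_mem_segment hzs hs, snd_eq_of_mem_segment hzt ht])
  exact ⟨fun z hz => (disjoint hz.1 hz.2).elim, fun ⟨z, hzs, hzt⟩ =>
    (disjoint (openSegment_subset_segment ℝ _ _ hzs) (openSegment_subset_segment ℝ _ _ hzt)).elim⟩

lemma racPair_of_horizontal_of_notMem_Ioo (hs : s.1.2 ≠ s.2.2) (ht : t.1.2 = t.2.2)
    (hst : t.1.2 ∉ Set.Ioo (min s.1.2 s.2.2) (max s.1.2 s.2.2)) : RacPair s t := by
  constructor
  · intro z hz w hw
    have hsnd : z.2 = w.2 := by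
      rw [snd_eq_of_mem_segment hz.2 ht, snd_eq_of_mem_segment hw.2 ht]
    have hcross : (z.1 - s.1.1) * (s.2.2 - s.1.2) = (w.1 - s.1.1) * (s.2.2 - s.1.2) := by
      rw [cross_eq_of_mem_segment hz.1, cross_eq_of_mem_segment hw.1, hsnd]
    have hfst := mul_right_cancel₀ (sub_ne_zero.2 hs.symm) hcross
    exact Prod.ext (sub_left_injective hfst) hsnd
  · rintro ⟨z, hzs, hzt⟩
    have hz := snd_eq_of_mem_segment (openSegment_subset_segment ℝ _ _ hzt) ht
    exact absurd (hz ▸ snd_mem_Ioo_of_mem_openSegment hzs hs) hst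

lemma racPair_of_inter_subset_left (ht : t.1 ≠ t.2)
    (hst : segment ℝ s.1 s.2 ∩ segment ℝ t.1 t.2 ⊆ {t.1}) : RacPair s t := by
  refine ⟨Set.subsingleton_singleton.anti hst, fun ⟨z, hzs, hzt⟩ => ?_⟩
  obtain rfl : z = t.1 :=
    hst ⟨openSegment_subset_segment ℝ _ _ hzs, openSegment_subset_segment ℝ _ _ hzt⟩
  exact absurd (left_mem_openSegment_iff.1 hzt) ht

lemma racPair_of_inter_subset_right (ht : t.1 ≠ t.2)
    (hst : segment ℝ s.1 s.2 ∩ segment ℝ t.1 t.2 ⊆ {t.2}) : RacPair s t := by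
  refine ⟨Set.subsingleton_singleton.anti hst, fun ⟨z, hzs, hzt⟩ => ?_⟩
  obtain rfl : z = t.2 :=
    hst ⟨openSegment_subset_segment ℝ _ _ hzs, openSegment_subset_segment ℝ _ _ hzt⟩
  exact absurd (right_mem_openSegment_iff.1 hzt) ht

end RacPair

namespace Polyline

lemma mem_curve_iff {P : Polyline} {z : ℝ × ℝ} :
    z ∈ P.curve ↔ ∃ s ∈ P.segs, z ∈ segment ℝ s.1 s.2 := by
  simp only [curve, Set.mem_iUnion]
  exact ⟨fun ⟨i, hi⟩ => ⟨_, ⟨i, rfl⟩, hi⟩, fun ⟨_, ⟨i, rfl⟩, hi⟩ => ⟨i, hi⟩⟩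

lemma segs_one (p q : ℝ × ℝ) : segs ⟨1, ![p, q]⟩ = {(p, q)} := by
  ext s
  simp [segs]

lemma segs_two (p q r : ℝ × ℝ) : segs ⟨2, ![p, q, r]⟩ = {(p, q), (q, r)} := by
  ext s
  simp [segs, Fin.exists_fin_two]

lemma segs_three (p q r u : ℝ × ℝ) :
    segs ⟨3, ![p, q, r, u]⟩ = {(p, q), (q, r), (r, u)} := by
  ext s
  simp [segs, Fin.exists_fin_succ]

end Polyline

namespace SimDrawing

lemma PlanarEach.subsingleton_inter {V : Type} {m : ℕ} {G : Fin m → SimpleGraph V}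
    {D : SimDrawing G} (hD : D.PlanarEach) {i : Fin m} {e e' : Sym2 V} (he : e ∈ (G i).edgeSet)
    (he' : e' ∈ (G i).edgeSet) (hne : e ≠ e') :
    ((D.poly i e).curve ∩ (D.poly i e').curve).Subsingleton := by
  intro z hz w hw
  obtain ⟨u, hu, hu', rfl⟩ := hD i e he e' he' hne hz
  obtain ⟨v, hv, hv', rfl⟩ := hD i e he e' he' hne hw
  by_contra huv
  exact hne (Sym2.eq_of_ne_mem (ne_of_apply_ne _ huv) hu hv hu' hv')

lemma isRacSim_of_racPair {V : Type} {W M : SimpleGraph V} {D : SimDrawing ![W, M]}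
    (hplanar : D.PlanarEach)
    (hrac : ∀ e ∈ W.edgeSet, ∀ e' ∈ M.edgeSet, ∀ s ∈ (D.poly 0 e).segs,
      ∀ t ∈ (D.poly 1 e').segs, RacPair s t) : D.IsRacSim := by
  have hrac' (i j : Fin 2) (hij : i ≠ j) : ∀ e ∈ (![W, M] i).edgeSet, ∀ e' ∈ (![W, M] j).edgeSet,
      ∀ s ∈ (D.poly i e).segs, ∀ t ∈ (D.poly j e').segs, RacPair s t := by
    obtain ⟨rfl, rfl⟩ | ⟨rfl, rfl⟩ : (i = 0 ∧ j = 1) ∨ (i = 1 ∧ j = 0) := by lia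
    · exact hrac
    · exact fun e he e' he' s hs t ht => (hrac e' he' e he t ht s hs).symm
  refine ⟨hplanar, fun i e he j e' he' hne s hs t ht => ?_,
    fun i j hij e he e' he' s hs t ht => (hrac' i j hij e he e' he' s hs t ht).2⟩
  rcases eq_or_ne i j with rfl | hij
  · have hee' : e ≠ e' := hne.resolve_left fun h => h rfl
    refine (PlanarEach.subsingleton_inter hplanar he he' hee').anti ?_
    exact Set.inter_subset_inter (fun z hz => Polyline.mem_curve_iff.2 ⟨s, hs, hz⟩)
      fun z hz => Polyline.mem_curve_iff.2 ⟨t, ht, hz⟩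
  · exact (hrac' i j hij e he e' he' s hs t ht).1

end SimDrawing

/-- The point of the plane with the given integer coordinates. -/
def latticePoint (x y : ℤ) : ℝ × ℝ := (x, y)

@[simp]
lemma latticePoint_fst (x y : ℤ) : (latticePoint x y).1 = x := rfl

@[simp]
lemma latticePoint_snd (x y : ℤ) : (latticePoint x y).2 = y := rfl

lemma onGridPt_latticePoint {a b x y : ℤ} (hx : x ∈ Set.Icc 1 a) (hy : y ∈ Set.Icc 1 b) :
    OnGridPt a b (latticePoint x y) :=
  ⟨x, y, rfl, hx.1, hx.2, hy.1, hy.2⟩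

lemma exists_lt_adj_of_mem_edgeSet {α : Type*} [LinearOrder α] {G : SimpleGraph α} {e : Sym2 α}
    (he : e ∈ G.edgeSet) : ∃ i j, i < j ∧ G.Adj i j ∧ e = s(i, j) := by
  induction e with | h i j =>
  obtain h | h := (G.ne_of_adj he).lt_or_gt
  · exact ⟨i, j, h, he, rfl⟩
  · exact ⟨j, i, h, G.adj_symm he, Sym2.eq_swap⟩

/-- The edges of the wheel with center `0` and rim cycle `1, …, m`. -/
inductive IsWheelEdge (m : ℕ) : Sym2 ℕ → Prop
  | spoke (i : ℕ) (hi : i ∈ Set.Icc 1 m) : IsWheelEdge m s(0, i)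
  | rim (j : ℕ) (hj : 1 ≤ j) (hjm : j < m) : IsWheelEdge m s(j, j + 1)
  | closing : IsWheelEdge m s(1, m)

/-- Coordinates for drawing the wheel with center `0` and rim cycle `1, …, m`. Rim vertex `i` is
placed at `(col i, row i)`, the center at `(2, top)`, and the rim edge from `j` to `j + 1` changes
height in column `bend j`. By `bend_cases` this column is free, or it is the column of the upper
endpoint of the edge. -/
structure WheelLayout (m : ℕ) where
  col : ℕ → ℤ
  row : ℕ → ℤ
  bend : ℕ → ℤ
  top : ℤ
  three_le : 3 ≤ m
  col_one : col 1 = 1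
  three_le_col_two : 3 ≤ col 2
  col_strictMonoOn : StrictMonoOn col (Set.Icc 1 m)
  three_le_row : ∀ i ∈ Set.Icc 1 m, 3 ≤ row i
  row_lt_top : ∀ i ∈ Set.Icc 1 m, row i < top
  bend_cases : ∀ j, 1 ≤ j → j < m →
    (col j < bend j ∧ bend j < col (j + 1)) ∨
    (bend j = col j ∧ row (j + 1) ≤ row j) ∨
    (bend j = col (j + 1) ∧ row j < row (j + 1))
  bend_one : bend 1 ≠ col 1
  bend_last : ∀ j, j + 1 = m → bend j ≠ col m
  bend_ne : ∀ j, 1 ≤ j → j + 1 < m → bend j ≠ col (j + 1) ∨ bend (j + 1) ≠ col (j + 1)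

namespace WheelLayout

variable {m : ℕ} (L : WheelLayout m) {i j : ℕ} {z : ℝ × ℝ}

/-- The position of a vertex of the wheel; vertex `0` is the center. -/
def pos (i : ℕ) : ℝ × ℝ :=
  if i = 0 then latticePoint 2 L.top else latticePoint (L.col i) (L.row i)

/-- The path of the wheel edge from the center to the rim vertex `i`. -/
def spoke (i : ℕ) : Polyline :=
  ⟨2, ![latticePoint 2 L.top, latticePoint (L.col i) (if i = 1 then L.top else L.top - 1),
    latticePoint (L.col i) (L.row i)]⟩

/-- The path of the rim edge from `j` to `j + 1`. -/
def rim (j : ℕ) : Polyline :=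
  ⟨3, ![latticePoint (L.col j) (L.row j), latticePoint (L.bend j) (L.row j - 1),
    latticePoint (L.bend j) (L.row (j + 1) - 1), latticePoint (L.col (j + 1)) (L.row (j + 1))]⟩

/-- The path of the rim edge from `1` to `m`, running below all other rim edges. -/
def closing : Polyline :=
  ⟨3, ![latticePoint (L.col 1) (L.row 1), latticePoint (L.col 1) 1, latticePoint (L.col m) 1,
    latticePoint (L.col m) (L.row m)]⟩

lemma pos_zero : L.pos 0 = latticePoint 2 L.top := if_pos rfl

lemma pos_of_ne_zero (hi : i ≠ 0) : L.pos i = latticePoint (L.col i) (L.row i) := if_neg hi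

lemma three_le_col (hi : 2 ≤ i) (him : i ≤ m) : 3 ≤ L.col i :=
  L.three_le_col_two.trans <|
    L.col_strictMonoOn.monotoneOn ⟨one_le_two, hi.trans him⟩ ⟨by lia, him⟩ hi

lemma one_le_col (hi : i ∈ Set.Icc 1 m) : 1 ≤ L.col i :=
  L.col_one ▸ L.col_strictMonoOn.monotoneOn ⟨le_rfl, hi.1.trans hi.2⟩ hi hi.1

lemma col_le_last (hi : i ∈ Set.Icc 1 m) : L.col i ≤ L.col m :=
  L.col_strictMonoOn.monotoneOn hi ⟨hi.1.trans hi.2, le_rfl⟩ hi.2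

lemma cast_col_le_iff (hi : i ∈ Set.Icc 1 m) (hj : j ∈ Set.Icc 1 m) :
    (L.col i : ℝ) ≤ L.col j ↔ i ≤ j := by
  rw [Int.cast_le, L.col_strictMonoOn.le_iff_le hi hj]

lemma eq_pos_iff (hi : i ∈ Set.Icc 1 m) :
    z = L.pos i ↔ z.1 = L.col i ∧ z.2 = L.row i := by
  rw [pos_of_ne_zero L (Nat.one_le_iff_ne_zero.1 hi.1), Prod.ext_iff]
  rfl

lemma pos_injOn : Set.InjOn L.pos (Set.Iic m) := by
  have ne_zero {i : ℕ} (hi : i ≤ m) (h0 : i ≠ 0) : L.pos i ≠ L.pos 0 := fun h => by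
    have hsnd := congrArg Prod.snd h
    rw [pos_zero, pos_of_ne_zero L h0, latticePoint_snd, latticePoint_snd, Int.cast_inj] at hsnd
    exact (L.row_lt_top i ⟨Nat.one_le_iff_ne_zero.2 h0, hi⟩).ne hsnd
  intro i hi j hj h
  rcases eq_or_ne i 0 with rfl | hi0 <;> rcases eq_or_ne j 0 with rfl | hj0
  · rfl
  · exact absurd h.symm (ne_zero hj hj0)
  · exact absurd h (ne_zero hi hi0)
  · have hfst := congrArg Prod.fst h
    rw [pos_of_ne_zero L hi0, pos_of_ne_zero L hj0, latticePoint_fst, latticePoint_fst,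
      Int.cast_inj] at hfst
    exact L.col_strictMonoOn.injOn ⟨Nat.one_le_iff_ne_zero.2 hi0, hi⟩
      ⟨Nat.one_le_iff_ne_zero.2 hj0, hj⟩ hfst

lemma eq_col_of_mem_spoke (hi : i ∈ Set.Icc 1 m) (hz : z ∈ (L.spoke i).curve)
    (htop : z.2 ≤ L.top - 1) : z.1 = L.col i ∧ L.row i ≤ z.2 := by
  have hrow : (L.row i : ℝ) + 1 ≤ L.top := mod_cast L.row_lt_top i hi
  rw [Polyline.mem_curve_iff, spoke, Polyline.segs_two] at hz
  obtain ⟨s, rfl | rfl, hs⟩ := hz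
  · have hsnd := snd_mem_uIcc_of_mem_segment hs
    have hcross := cross_eq_of_mem_segment hs
    simp only [latticePoint_fst, latticePoint_snd, Set.mem_uIcc] at hsnd hcross
    split_ifs at hsnd hcross with h1
    · exfalso
      rcases hsnd with h | h <;> linarith [h.1]
    · push_cast at hsnd hcross
      have : z.2 = L.top - 1 := by rcases hsnd with h | h <;> linarith [h.1, h.2]
      rw [this] at hcross ⊢
      constructor <;> linarith
  · have hfst := fst_eq_of_mem_segment hs rfl
    have hsnd := snd_mem_uIcc_of_mem_segment hs
    simp only [latticePoint_fst, latticePoint_snd, Set.mem_uIcc] at hsnd hfst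
    refine ⟨hfst, ?_⟩
    split_ifs at hsnd <;> push_cast at hsnd <;> rcases hsnd with h | h <;> linarith [h.1, h.2]

lemma fst_le_two_of_mem_spoke_one (hz : z ∈ (L.spoke 1).curve) : z.1 ≤ 2 := by
  rw [Polyline.mem_curve_iff, spoke, Polyline.segs_two] at hz
  obtain ⟨s, rfl | rfl, hs⟩ := hz <;>
  · have hfst := fst_mem_uIcc_of_mem_segment hs
    simp only [latticePoint_fst, L.col_one, Set.mem_uIcc] at hfst
    grind

lemma mem_spoke_above (hi : 2 ≤ i) (him : i ≤ m) (hz : z ∈ (L.spoke i).curve)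
    (htop : L.top - 1 < z.2) :
    z.2 ≤ L.top ∧ z.1 - 2 = (L.top - z.2) * (L.col i - 2) := by
  have hrow : (L.row i : ℝ) + 1 ≤ L.top := mod_cast L.row_lt_top i ⟨by lia, him⟩
  rw [Polyline.mem_curve_iff, spoke, Polyline.segs_two, if_neg (by lia)] at hz
  obtain ⟨s, rfl | rfl, hs⟩ := hz <;>
  · have hsnd := snd_mem_uIcc_of_mem_segment hs
    have hcross := cross_eq_of_mem_segment hs
    simp only [latticePoint_fst, latticePoint_snd, Set.mem_uIcc] at hsnd hcross
    push_cast at hsnd hcross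
    constructor <;> rcases hsnd with h | h <;> linarith [h.1, h.2]

lemma eq_pos_zero_of_mem_spoke_spoke (hi : 1 ≤ i) (hij : i < j) (hj : j ≤ m)
    (hzi : z ∈ (L.spoke i).curve) (hzj : z ∈ (L.spoke j).curve) : z = L.pos 0 := by
  have hcol : (L.col i : ℝ) < L.col j :=
    mod_cast L.col_strictMonoOn ⟨hi, by lia⟩ ⟨by lia, hj⟩ hij
  rcases le_or_gt z.2 (L.top - 1) with htop | htop
  · have hi' := (L.eq_col_of_mem_spoke ⟨hi, by lia⟩ hzi htop).1
    have hj' := (L.eq_col_of_mem_spoke ⟨by lia, hj⟩ hzj htop).1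
    linarith
  obtain ⟨hle, hz⟩ := L.mem_spoke_above (by lia) hj hzj htop
  have hcolj : (3 : ℝ) ≤ L.col j := mod_cast L.three_le_col (by lia) hj
  have hsnd : z.2 = L.top := by
    rcases hi.eq_or_lt with rfl | hi
    · nlinarith [L.fst_le_two_of_mem_spoke_one hzi]
    · nlinarith [(L.mem_spoke_above hi (by lia) hzi htop).2]
  rw [hsnd, sub_self, zero_mul, sub_eq_zero] at hz
  rw [pos_zero]
  exact Prod.ext (by simpa using hz) hsnd

lemma bend_mem_Icc (hj : 1 ≤ j) (hjm : j < m) : L.bend j ∈ Set.Icc (L.col j) (L.col (j + 1)) := by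
  have := L.col_strictMonoOn ⟨hj, hjm.le⟩ ⟨by lia, hjm⟩ j.lt_succ_self
  have := L.bend_cases j hj hjm
  constructor <;> lia

lemma mem_rim_bounds (hj : 1 ≤ j) (hjm : j < m) (hz : z ∈ (L.rim j).curve) :
    z.1 ∈ Set.Icc (L.col j : ℝ) (L.col (j + 1)) ∧ z.2 ∈ Set.Icc (2 : ℝ) (L.top - 1) := by
  have hbl : (L.col j : ℝ) ≤ L.bend j := mod_cast (L.bend_mem_Icc hj hjm).1
  have hbr : (L.bend j : ℝ) ≤ L.col (j + 1) := mod_cast (L.bend_mem_Icc hj hjm).2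
  have hrl : (3 : ℝ) ≤ L.row j := mod_cast L.three_le_row j ⟨hj, hjm.le⟩
  have hrr : (3 : ℝ) ≤ L.row (j + 1) := mod_cast L.three_le_row (j + 1) ⟨by lia, hjm⟩
  have htl : (L.row j : ℝ) + 1 ≤ L.top := mod_cast L.row_lt_top j ⟨hj, hjm.le⟩
  have htr : (L.row (j + 1) : ℝ) + 1 ≤ L.top := mod_cast L.row_lt_top (j + 1) ⟨by lia, hjm⟩
  rw [Polyline.mem_curve_iff, rim, Polyline.segs_three] at hz
  obtain ⟨s, rfl | rfl | rfl, hs⟩ := hz <;>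
  · have hfst := fst_mem_uIcc_of_mem_segment hs
    have hsnd := snd_mem_uIcc_of_mem_segment hs
    simp only [latticePoint_fst, latticePoint_snd] at hfst hsnd
    push_cast at hsnd
    exact ⟨Set.uIcc_subset_Icc (by constructor <;> linarith) (by constructor <;> linarith) hfst,
      Set.uIcc_subset_Icc (by constructor <;> linarith) (by constructor <;> linarith) hsnd⟩

lemma mem_rim_left (hj : 1 ≤ j) (hjm : j < m) (hz : z ∈ (L.rim j).curve) (hcol : z.1 = L.col j) :
    z.2 ≤ L.row j ∧ (L.bend j ≠ L.col j → z.2 = L.row j) := by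
  have hlt := L.col_strictMonoOn ⟨hj, hjm.le⟩ ⟨by lia, hjm⟩ j.lt_succ_self
  have hcases := L.bend_cases j hj hjm
  rw [Polyline.mem_curve_iff, rim, Polyline.segs_three] at hz
  obtain ⟨s, rfl | rfl | rfl, hs⟩ := hz
  all_goals
    have hfst := fst_mem_uIcc_of_mem_segment hs
    have hsnd := snd_mem_uIcc_of_mem_segment hs
    have hcross := cross_eq_of_mem_segment hs
    simp only [latticePoint_fst, latticePoint_snd, Set.mem_uIcc, hcol] at hfst hsnd hcross
    norm_cast at hfst
    push_cast at hsnd hcross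
  · refine ⟨by grind, fun hb => ?_⟩
    have : (L.bend j : ℝ) - L.col j ≠ 0 := sub_ne_zero.2 (mod_cast hb)
    have : (z.2 - L.row j) * ((L.bend j : ℝ) - L.col j) = 0 := by linarith
    grind
  all_goals
    have hb : L.bend j = L.col j := by lia
    have hrow : (L.row (j + 1) : ℝ) ≤ L.row j := by norm_cast; lia
    exact ⟨by grind, fun h => absurd hb h⟩

lemma mem_rim_right (hj : 1 ≤ j) (hjm : j < m) (hz : z ∈ (L.rim j).curve)
    (hcol : z.1 = L.col (j + 1)) :
    z.2 ≤ L.row (j + 1) ∧ (L.bend j ≠ L.col (j + 1) → z.2 = L.row (j + 1)) := by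
  have hlt := L.col_strictMonoOn ⟨hj, hjm.le⟩ ⟨by lia, hjm⟩ j.lt_succ_self
  have hcases := L.bend_cases j hj hjm
  rw [Polyline.mem_curve_iff, rim, Polyline.segs_three] at hz
  obtain ⟨s, hs, hz⟩ := hz
  rw [Set.insert_comm, Set.pair_comm, Set.insert_comm] at hs
  obtain rfl | rfl | rfl := hs
  all_goals
    have hfst := fst_mem_uIcc_of_mem_segment hz
    have hsnd := snd_mem_uIcc_of_mem_segment hz
    have hcross := cross_eq_of_mem_segment hz
    simp only [latticePoint_fst, latticePoint_snd, Set.mem_uIcc, hcol] at hfst hsnd hcross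
    norm_cast at hfst
    push_cast at hsnd hcross
  · refine ⟨by grind, fun hb => ?_⟩
    have : (L.col (j + 1) : ℝ) - L.bend j ≠ 0 := sub_ne_zero.2 (mod_cast hb.symm)
    have : (z.2 - L.row (j + 1)) * ((L.col (j + 1) : ℝ) - L.bend j) = 0 := by linarith
    grind
  all_goals
    have hb : L.bend j = L.col (j + 1) := by lia
    have hrow : (L.row j : ℝ) ≤ L.row (j + 1) := by norm_cast; lia
    exact ⟨by grind, fun h => absurd hb h⟩

lemma mem_closing_cases (hz : z ∈ L.closing.curve) :
    (z.1 = L.col 1 ∧ z.2 ≤ L.row 1) ∨ z.2 = 1 ∨ (z.1 = L.col m ∧ z.2 ≤ L.row m) := by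
  have hm := L.three_le
  have hrow (i : ℕ) (hi : i ∈ Set.Icc 1 m) : (3 : ℝ) ≤ L.row i := mod_cast L.three_le_row i hi
  have hrow_one := hrow 1 ⟨le_rfl, by lia⟩
  have hrow_last := hrow m ⟨by lia, le_rfl⟩
  rw [Polyline.mem_curve_iff, closing, Polyline.segs_three] at hz
  obtain ⟨s, rfl | rfl | rfl, hs⟩ := hz
  · have hsnd := snd_mem_uIcc_of_mem_segment hs
    simp only [latticePoint_snd, Int.cast_one, Set.mem_uIcc] at hsnd
    exact .inl ⟨fst_eq_of_mem_segment hs rfl, by grind⟩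
  · exact .inr (.inl (by simpa using snd_eq_of_mem_segment hs rfl))
  · have hsnd := snd_mem_uIcc_of_mem_segment hs
    simp only [latticePoint_snd, Int.cast_one, Set.mem_uIcc] at hsnd
    exact .inr (.inr ⟨fst_eq_of_mem_segment hs rfl, by grind⟩)

lemma snd_le_of_mem_closing (hz : z ∈ L.closing.curve) : z.2 ≤ L.top - 1 := by
  have hm := L.three_le
  have hrow (i : ℕ) (hi : i ∈ Set.Icc 1 m) : (L.row i : ℝ) + 1 ≤ L.top :=
    mod_cast L.row_lt_top i hi
  have hone : (3 : ℝ) ≤ L.row 1 := mod_cast L.three_le_row 1 ⟨le_rfl, by lia⟩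
  rcases L.mem_closing_cases hz with h | h | h <;>
    linarith [hrow 1 ⟨le_rfl, by lia⟩, hrow m ⟨by lia, le_rfl⟩]

lemma eq_pos_of_mem_spoke_rim (hi : i ∈ Set.Icc 1 m) (hj : 1 ≤ j) (hjm : j < m)
    (hzi : z ∈ (L.spoke i).curve) (hzj : z ∈ (L.rim j).curve) :
    i ∈ s(j, j + 1) ∧ z = L.pos i := by
  obtain ⟨⟨hl, hr⟩, -, htop⟩ := L.mem_rim_bounds hj hjm hzj
  obtain ⟨hcol, hrow⟩ := L.eq_col_of_mem_spoke hi hzi htop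
  rw [hcol, L.cast_col_le_iff ⟨hj, hjm.le⟩ hi] at hl
  rw [hcol, L.cast_col_le_iff hi ⟨by lia, hjm⟩] at hr
  obtain rfl | rfl : i = j ∨ i = j + 1 := by lia
  · exact ⟨Sym2.mem_mk_left _ _,
      (L.eq_pos_iff hi).2 ⟨hcol, (L.mem_rim_left hj hjm hzj hcol).1.antisymm hrow⟩⟩
  · exact ⟨Sym2.mem_mk_right _ _,
      (L.eq_pos_iff hi).2 ⟨hcol, (L.mem_rim_right hj hjm hzj hcol).1.antisymm hrow⟩⟩

lemma eq_pos_of_mem_spoke_closing (hi : i ∈ Set.Icc 1 m)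
    (hzi : z ∈ (L.spoke i).curve) (hz : z ∈ L.closing.curve) : i ∈ s(1, m) ∧ z = L.pos i := by
  have hm := L.three_le
  have h1 : 1 ∈ Set.Icc 1 m := ⟨le_rfl, by lia⟩
  have hlast : m ∈ Set.Icc 1 m := ⟨by lia, le_rfl⟩
  obtain ⟨hcol, hrow⟩ := L.eq_col_of_mem_spoke hi hzi (L.snd_le_of_mem_closing hz)
  have eq_of_col {k : ℕ} (hk : k ∈ Set.Icc 1 m) (h : z.1 = L.col k) : i = k :=
    L.col_strictMonoOn.injOn hi hk (Int.cast_injective (α := ℝ) (hcol ▸ h))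
  rcases L.mem_closing_cases hz with ⟨h, hle⟩ | h | ⟨h, hle⟩
  · obtain rfl := eq_of_col h1 h
    exact ⟨Sym2.mem_mk_left _ _, (L.eq_pos_iff hi).2 ⟨hcol, hle.antisymm hrow⟩⟩
  · have : (3 : ℝ) ≤ L.row i := mod_cast L.three_le_row i hi
    linarith
  · obtain rfl := eq_of_col hlast h
    exact ⟨Sym2.mem_mk_right _ _, (L.eq_pos_iff hi).2 ⟨hcol, hle.antisymm hrow⟩⟩

lemma eq_pos_of_mem_rim_rim {k : ℕ} (hj : 1 ≤ j) (hjk : j < k) (hk : k < m)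
    (hzj : z ∈ (L.rim j).curve) (hzk : z ∈ (L.rim k).curve) : k = j + 1 ∧ z = L.pos k := by
  have hjr : j + 1 ∈ Set.Icc 1 m := ⟨by lia, by lia⟩
  obtain ⟨⟨-, hr⟩, -⟩ := L.mem_rim_bounds hj (by lia) hzj
  obtain ⟨⟨hl, -⟩, -⟩ := L.mem_rim_bounds (by lia) hk hzk
  obtain rfl : k = j + 1 := by
    have := (L.cast_col_le_iff ⟨by lia, hk.le⟩ hjr).1 (hl.trans hr)
    lia
  have hcol := hr.antisymm hl
  refine ⟨rfl, (L.eq_pos_iff hjr).2 ⟨hcol, ?_⟩⟩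
  rcases L.bend_ne j hj hk with hb | hb
  · exact (L.mem_rim_right hj (by lia) hzj hcol).2 hb
  · exact (L.mem_rim_left (by lia) hk hzk hcol).2 hb

lemma eq_pos_of_mem_rim_closing (hj : 1 ≤ j) (hjm : j < m)
    (hzj : z ∈ (L.rim j).curve) (hz : z ∈ L.closing.curve) :
    (j = 1 ∧ z = L.pos 1) ∨ (j + 1 = m ∧ z = L.pos m) := by
  obtain ⟨⟨hl, hr⟩, hge, -⟩ := L.mem_rim_bounds hj hjm hzj
  have h1 : 1 ∈ Set.Icc 1 m := ⟨le_rfl, by lia⟩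
  have hlast : m ∈ Set.Icc 1 m := ⟨by lia, le_rfl⟩
  rcases L.mem_closing_cases hz with ⟨hcol, -⟩ | h | ⟨hcol, -⟩
  · rw [hcol, L.cast_col_le_iff ⟨hj, hjm.le⟩ h1] at hl
    obtain rfl : j = 1 := by lia
    exact .inl ⟨rfl, (L.eq_pos_iff h1).2 ⟨hcol, (L.mem_rim_left hj hjm hzj hcol).2 L.bend_one⟩⟩
  · linarith
  · rw [hcol, L.cast_col_le_iff hlast ⟨by lia, hjm⟩] at hr
    obtain rfl : m = j + 1 := by lia
    exact .inr ⟨rfl, (L.eq_pos_iff hlast).2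
      ⟨hcol, (L.mem_rim_right hj hjm hzj hcol).2 (L.bend_last j rfl)⟩⟩

/-- The path of a wheel edge. The endpoints are recovered from the unordered pair as its minimum
and its maximum. -/
def wheelPath (e : Sym2 ℕ) : Polyline :=
  if e.inf = 0 then L.spoke e.sup else if e.sup = e.inf + 1 then L.rim e.inf else L.closing

lemma wheelPath_spoke (i : ℕ) : L.wheelPath s(0, i) = L.spoke i := by simp [wheelPath]

lemma wheelPath_rim (hj : 1 ≤ j) : L.wheelPath s(j, j + 1) = L.rim j := by
  simp [wheelPath, Nat.one_le_iff_ne_zero.1 hj]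

lemma wheelPath_closing : L.wheelPath s(1, m) = L.closing := by
  have := L.three_le
  simp [wheelPath, show 1 ⊔ m = m by lia, show 1 ⊓ m = 1 by lia, show m ≠ 2 by lia]

/-- Two edges meet only in the positions of their common endpoints. -/
def MeetInEnds (e e' : Sym2 ℕ) : Prop :=
  (L.wheelPath e).curve ∩ (L.wheelPath e').curve ⊆ {z | ∃ i, i ∈ e ∧ i ∈ e' ∧ z = L.pos i}

variable {L} in
lemma MeetInEnds.symm {e e' : Sym2 ℕ} (h : L.MeetInEnds e e') : L.MeetInEnds e' e :=
  fun _ hz => (h hz.symm).imp fun _ ⟨hi, hi', hz⟩ => ⟨hi', hi, hz⟩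

lemma meetInEnds_spoke_spoke {i' : ℕ} (hi : i ∈ Set.Icc 1 m) (hi' : i' ∈ Set.Icc 1 m)
    (hne : i ≠ i') : L.MeetInEnds s(0, i) s(0, i') := by
  wlog hlt : i < i'
  · exact (this L hi' hi hne.symm (by lia)).symm
  rintro z ⟨hz, hz'⟩
  rw [wheelPath_spoke] at hz hz'
  exact ⟨0, by simp, by simp, L.eq_pos_zero_of_mem_spoke_spoke hi.1 hlt hi'.2 hz hz'⟩

lemma meetInEnds_spoke_rim (hi : i ∈ Set.Icc 1 m) (hj : 1 ≤ j) (hjm : j < m) :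
    L.MeetInEnds s(0, i) s(j, j + 1) := by
  rintro z ⟨hz, hz'⟩
  rw [wheelPath_spoke] at hz
  rw [wheelPath_rim L hj] at hz'
  exact ⟨i, by simp, L.eq_pos_of_mem_spoke_rim hi hj hjm hz hz'⟩

lemma meetInEnds_spoke_closing (hi : i ∈ Set.Icc 1 m) : L.MeetInEnds s(0, i) s(1, m) := by
  rintro z ⟨hz, hz'⟩
  rw [wheelPath_spoke] at hz
  rw [wheelPath_closing] at hz'
  exact ⟨i, by simp, L.eq_pos_of_mem_spoke_closing hi hz hz'⟩

lemma meetInEnds_rim_rim {k : ℕ} (hj : 1 ≤ j) (hjm : j < m) (hk : 1 ≤ k) (hkm : k < m)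
    (hne : j ≠ k) : L.MeetInEnds s(j, j + 1) s(k, k + 1) := by
  wlog hlt : j < k
  · exact (this L hk hkm hj hjm hne.symm (by lia)).symm
  rintro z ⟨hz, hz'⟩
  rw [wheelPath_rim L hj] at hz
  rw [wheelPath_rim L hk] at hz'
  obtain ⟨rfl, hpos⟩ := L.eq_pos_of_mem_rim_rim hj hlt hkm hz hz'
  exact ⟨j + 1, by simp, by simp, hpos⟩

lemma meetInEnds_rim_closing (hj : 1 ≤ j) (hjm : j < m) :
    L.MeetInEnds s(j, j + 1) s(1, m) := by
  rintro z ⟨hz, hz'⟩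
  rw [wheelPath_rim L hj] at hz
  rw [wheelPath_closing] at hz'
  obtain ⟨rfl, hpos⟩ | ⟨rfl, hpos⟩ := L.eq_pos_of_mem_rim_closing hj hjm hz hz'
  · exact ⟨1, by simp, by simp, hpos⟩
  · exact ⟨j + 1, by simp, by simp, hpos⟩

theorem meetInEnds_of_isWheelEdge {e e' : Sym2 ℕ} (he : IsWheelEdge m e) (he' : IsWheelEdge m e')
    (hne : e ≠ e') : L.MeetInEnds e e' := by
  cases he with
  | spoke i hi =>
    cases he' with
    | spoke i' hi' => exact L.meetInEnds_spoke_spoke hi hi' (by grind)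
    | rim k hk hkm => exact L.meetInEnds_spoke_rim hi hk hkm
    | closing => exact L.meetInEnds_spoke_closing hi
  | rim j hj hjm =>
    cases he' with
    | spoke i' hi' => exact (L.meetInEnds_spoke_rim hi' hj hjm).symm
    | rim k hk hkm => exact L.meetInEnds_rim_rim hj hjm hk hkm (by grind)
    | closing => exact L.meetInEnds_rim_closing hj hjm
  | closing =>
    cases he' with
    | spoke i' hi' => exact (L.meetInEnds_spoke_closing hi').symm
    | rim k hk hkm => exact (L.meetInEnds_rim_closing hk hkm).symm
    | closing => exact absurd rfl hne

/-- The three shapes of wheel segments: vertical, horizontal in the bottom or the top row, or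
joining two consecutive rows. -/
def IsWheelShape (s : (ℝ × ℝ) × (ℝ × ℝ)) : Prop :=
  s.1.1 = s.2.1 ∨ (s.1.2 = s.2.2 ∧ (s.1.2 = 1 ∨ s.1.2 = L.top)) ∨
    ∃ k : ℤ, min s.1.2 s.2.2 = k ∧ max s.1.2 s.2.2 = (k + 1 : ℤ)

lemma isWheelShape_of_mem_segs {e : Sym2 ℕ} (he : IsWheelEdge m e) {s : (ℝ × ℝ) × (ℝ × ℝ)}
    (hs : s ∈ (L.wheelPath e).segs) : L.IsWheelShape s := by
  cases he with
  | spoke i hi =>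
    rw [wheelPath_spoke, spoke, Polyline.segs_two] at hs
    obtain rfl | rfl := hs
    · rcases eq_or_ne i 1 with rfl | h1
      · exact .inr (.inl ⟨rfl, .inr rfl⟩)
      · exact .inr (.inr ⟨L.top - 1, by simp [h1]⟩)
    · exact .inl rfl
  | rim j hj hjm =>
    rw [wheelPath_rim L hj, rim, Polyline.segs_three] at hs
    obtain rfl | rfl | rfl := hs
    · exact .inr (.inr ⟨L.row j - 1, by simp⟩)
    · exact .inl rfl
    · exact .inr (.inr ⟨L.row (j + 1) - 1, by simp⟩)
  | closing =>
    rw [wheelPath_closing, closing, Polyline.segs_three] at hs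
    obtain rfl | rfl | rfl := hs
    · exact .inl rfl
    · exact .inr (.inl ⟨rfl, .inl (by simp)⟩)
    · exact .inl rfl

variable {L} in
lemma IsWheelShape.racPair_horizontal {s t : (ℝ × ℝ) × (ℝ × ℝ)} (hs : L.IsWheelShape s)
    (ht : t.1.2 = t.2.2) {r : ℤ} (hr : t.1.2 = r) (h1 : 1 < r) (htop : r < L.top) :
    RacPair s t := by
  obtain hs | ⟨hs, hs_row⟩ | ⟨k, hmin, hmax⟩ := hs
  · exact racPair_of_vertical_of_horizontal hs ht
  · refine racPair_of_horizontal_of_ne hs ht ?_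
    rw [hr]
    obtain h | h := hs_row <;> rw [h] <;> norm_cast <;> lia
  · refine racPair_of_horizontal_of_notMem_Ioo (fun h => ?_) ht ?_
    · rw [h, min_self] at hmin
      rw [h, max_self, hmin, Int.cast_inj] at hmax
      lia
    · rw [hmin, hmax, hr, Set.mem_Ioo, Int.cast_lt, Int.cast_lt]
      lia

lemma spoke_segment_halfPlane (hi : i ∈ Set.Icc 1 m) {s : (ℝ × ℝ) × (ℝ × ℝ)}
    (hs : s ∈ (L.spoke i).segs) :
    segment ℝ s.1 s.2 ⊆ {z | z.1 ≤ 1} ∨ segment ℝ s.1 s.2 ⊆ {z | 2 ≤ z.1} ∨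
      segment ℝ s.1 s.2 ⊆ {z | L.top ≤ z.2} := by
  rw [spoke, Polyline.segs_two] at hs
  rcases eq_or_ne i 1 with rfl | h1
  · obtain rfl | rfl := hs
    · exact .inr (.inr fun z hz => (snd_eq_of_mem_segment hz rfl).ge)
    · exact .inl fun z hz => (fst_eq_of_mem_segment hz rfl).le.trans (by simp [L.col_one])
  · have hcol : (3 : ℝ) ≤ L.col i := mod_cast L.three_le_col (by grind) hi.2
    refine .inr (.inl fun z hz => ?_)
    obtain rfl | rfl := hs <;>
    · have hfst := fst_mem_uIcc_of_mem_segment hz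
      simp only [latticePoint_fst, Set.mem_uIcc] at hfst
      push_cast at hfst
      grind

lemma wheel_segment_halfPlane {e : Sym2 ℕ} (he : IsWheelEdge m e) {s : (ℝ × ℝ) × (ℝ × ℝ)}
    (hs : s ∈ (L.wheelPath e).segs) :
    segment ℝ s.1 s.2 ⊆ {z | z.1 ≤ 1} ∨ segment ℝ s.1 s.2 ⊆ {z | 2 ≤ z.1} ∨
      segment ℝ s.1 s.2 ⊆ {z | L.top ≤ z.2} ∨ segment ℝ s.1 s.2 ⊆ {z | z.2 ≤ L.top - 1} := by
  cases he with
  | spoke i hi =>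
    rw [wheelPath_spoke] at hs
    have := L.spoke_segment_halfPlane hi hs
    tauto
  | rim j hj hjm =>
    rw [wheelPath_rim L hj] at hs
    exact .inr (.inr (.inr fun z hz =>
      (L.mem_rim_bounds hj hjm (Polyline.mem_curve_iff.2 ⟨s, hs, hz⟩)).2.2))
  | closing =>
    rw [wheelPath_closing] at hs
    exact .inr (.inr (.inr fun z hz =>
      L.snd_le_of_mem_closing (Polyline.mem_curve_iff.2 ⟨s, hs, hz⟩)))

lemma mem_segment_pos_zero_pos_one (htop : L.row 1 = L.top - 1)
    (hz : z ∈ segment ℝ (L.pos 0) (L.pos 1)) :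
    z.1 ∈ Set.Icc (1 : ℝ) 2 ∧ z.2 = z.1 + L.top - 2 := by
  rw [pos_zero, pos_of_ne_zero L one_ne_zero, L.col_one, htop] at hz
  have hfst := fst_mem_uIcc_of_mem_segment hz
  have hcross := cross_eq_of_mem_segment hz
  simp only [latticePoint_fst, latticePoint_snd] at hfst hcross
  push_cast at hfst hcross
  rw [Set.uIcc_of_ge one_le_two] at hfst
  exact ⟨hfst, by linarith⟩

/-- Each half-plane of `wheel_segment_halfPlane` touches the matching edge at the center in one of
its endpoints only. -/
lemma racPair_center (htop : L.row 1 = L.top - 1) {e : Sym2 ℕ} (he : IsWheelEdge m e)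
    {s : (ℝ × ℝ) × (ℝ × ℝ)} (hs : s ∈ (L.wheelPath e).segs) :
    RacPair s (L.pos 0, L.pos 1) := by
  have hm := L.three_le
  have hne : L.pos 0 ≠ L.pos 1 := L.pos_injOn.ne m.zero_le (by lia : 1 ≤ m) zero_ne_one
  have eq_left {z : ℝ × ℝ} (h2 : z.1 = 2) (hz : z.2 = z.1 + L.top - 2) : z = L.pos 0 := by
    rw [pos_zero]
    exact Prod.ext (by simp [h2]) (by rw [hz, h2, latticePoint_snd]; ring)
  have eq_right {z : ℝ × ℝ} (h1 : z.1 = 1) (hz : z.2 = z.1 + L.top - 2) : z = L.pos 1 := by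
    rw [pos_of_ne_zero L one_ne_zero, L.col_one, htop]
    exact Prod.ext (by simp [h1]) (by rw [hz, h1, latticePoint_snd]; push_cast; ring)
  obtain h | h | h | h := L.wheel_segment_halfPlane he hs
  · refine racPair_of_inter_subset_right hne fun z hz => ?_
    obtain ⟨⟨hl, -⟩, hline⟩ := L.mem_segment_pos_zero_pos_one htop hz.2
    exact eq_right ((h hz.1).antisymm hl) hline
  · refine racPair_of_inter_subset_left hne fun z hz => ?_
    obtain ⟨⟨-, hr⟩, hline⟩ := L.mem_segment_pos_zero_pos_one htop hz.2
    exact eq_left (hr.antisymm (h hz.1)) hline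
  · refine racPair_of_inter_subset_left hne fun z hz => ?_
    obtain ⟨⟨-, hr⟩, hline⟩ := L.mem_segment_pos_zero_pos_one htop hz.2
    have : L.top ≤ z.2 := h hz.1
    exact eq_left (by linarith) hline
  · refine racPair_of_inter_subset_right hne fun z hz => ?_
    obtain ⟨⟨hl, -⟩, hline⟩ := L.mem_segment_pos_zero_pos_one htop hz.2
    have : z.2 ≤ L.top - 1 := h hz.1
    exact eq_right (by linarith) hline

/-- The path of a matching edge: the straight segment between its endpoints. -/
def matchPath (e : Sym2 ℕ) : Polyline :=
  ⟨1, ![L.pos e.inf, L.pos e.sup]⟩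

lemma matchPath_of_lt (hij : i < j) : L.matchPath s(i, j) = ⟨1, ![L.pos i, L.pos j]⟩ := by
  simp [matchPath, hij.le]

/-- The layout suits the matching `N`: apart from an edge between the center and vertex `1`, all
edges of `N` are horizontal, and distinct edges lie in distinct rows. The value `row 0` matters only
as the label of the row of an edge at the center. -/
structure Fits (N : SimpleGraph ℕ) : Prop where
  le_of_adj : ∀ {i j}, N.Adj i j → j ≤ m
  row_eq : ∀ {i j}, N.Adj i j → L.row i = L.row j
  edge_eq : ∀ {i j k l}, N.Adj i j → N.Adj k l → L.row j = L.row l → s(i, j) = s(k, l)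
  adj_zero : ∀ {j}, N.Adj 0 j → j = 1 ∧ L.row 1 = L.top - 1

namespace Fits

variable {L} {N : SimpleGraph ℕ} {e e' : Sym2 ℕ}

lemma snd_mem_matchPath (hN : L.Fits N) (hij : i < j) (hadj : N.Adj i j)
    (hz : z ∈ (L.matchPath s(i, j)).curve) :
    L.row j ≤ z.2 ∧ (z.2 = L.row j ∨ L.row j = L.top - 1) := by
  rw [matchPath_of_lt L hij, Polyline.mem_curve_iff, Polyline.segs_one] at hz
  obtain ⟨s, rfl, hz⟩ := hz
  rcases eq_or_ne i 0 with rfl | hi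
  · obtain ⟨rfl, htop⟩ := hN.adj_zero hadj
    obtain ⟨⟨hl, -⟩, hline⟩ := L.mem_segment_pos_zero_pos_one htop hz
    refine ⟨?_, .inr htop⟩
    rw [htop, Int.cast_sub, Int.cast_one]
    linarith
  · rw [pos_of_ne_zero L hi, pos_of_ne_zero L (by lia), hN.row_eq hadj] at hz
    have := snd_eq_of_mem_segment hz rfl
    exact ⟨this.ge, .inl this⟩

lemma disjoint_curve (hN : L.Fits N) (he : e ∈ N.edgeSet) (he' : e' ∈ N.edgeSet) (hne : e ≠ e') :
    Disjoint (L.matchPath e).curve (L.matchPath e').curve := by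
  obtain ⟨i, j, hij, hadj, rfl⟩ := exists_lt_adj_of_mem_edgeSet he
  obtain ⟨k, l, hkl, hadj', rfl⟩ := exists_lt_adj_of_mem_edgeSet he'
  refine Set.disjoint_left.2 fun z hz hz' => hne (hN.edge_eq hadj hadj' ?_)
  obtain ⟨hle, hrow⟩ := hN.snd_mem_matchPath hij hadj hz
  obtain ⟨hle', hrow'⟩ := hN.snd_mem_matchPath hkl hadj' hz'
  have hj := L.row_lt_top j ⟨by lia, hN.le_of_adj hadj⟩
  have hl := L.row_lt_top l ⟨by lia, hN.le_of_adj hadj'⟩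
  rcases hrow with hrow | hrow <;> rcases hrow' with hrow' | hrow'
  · exact_mod_cast hrow.symm.trans hrow'
  · rw [hrow, Int.cast_le] at hle'
    lia
  · rw [hrow', Int.cast_le] at hle
    lia
  · exact hrow.trans hrow'.symm

lemma racPair (hN : L.Fits N) (he : IsWheelEdge m e) (he' : e' ∈ N.edgeSet)
    {s t : (ℝ × ℝ) × (ℝ × ℝ)} (hs : s ∈ (L.wheelPath e).segs) (ht : t ∈ (L.matchPath e').segs) :
    RacPair s t := by
  obtain ⟨i, j, hij, hadj, rfl⟩ := exists_lt_adj_of_mem_edgeSet he'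
  rw [matchPath_of_lt L hij, Polyline.segs_one] at ht
  obtain rfl := ht
  rcases eq_or_ne i 0 with rfl | hi
  · obtain ⟨rfl, htop⟩ := hN.adj_zero hadj
    exact L.racPair_center htop he hs
  · have hj : j ∈ Set.Icc 1 m := ⟨by lia, hN.le_of_adj hadj⟩
    have hrow := L.three_le_row j hj
    rw [pos_of_ne_zero L hi, pos_of_ne_zero L (by lia), hN.row_eq hadj]
    exact (L.isWheelShape_of_mem_segs he hs).racPair_horizontal rfl (r := L.row j) rfl (by lia)
      (L.row_lt_top j hj)

end Fits

lemma ends_wheelPath {e : Sym2 ℕ} (he : IsWheelEdge m e) :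
    s((L.wheelPath e).first, (L.wheelPath e).last) = e.map L.pos := by
  have hm := L.three_le
  cases he with
  | spoke i hi =>
    rw [wheelPath_spoke, Sym2.map_mk, pos_zero, pos_of_ne_zero L (by grind)]
    rfl
  | rim j hj hjm =>
    rw [wheelPath_rim L hj, Sym2.map_mk, pos_of_ne_zero L (by lia), pos_of_ne_zero L (by lia)]
    rfl
  | closing =>
    rw [wheelPath_closing, Sym2.map_mk, pos_of_ne_zero L one_ne_zero, pos_of_ne_zero L (by lia)]
    rfl

lemma ends_matchPath (e : Sym2 ℕ) :
    s((L.matchPath e).first, (L.matchPath e).last) = e.map L.pos := by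
  induction e with | h i j =>
  rcases le_total i j with hij | hij
  · simp [matchPath, Polyline.first, Polyline.last, hij]
  · simp [matchPath, Polyline.first, Polyline.last, hij, Sym2.eq_swap]

lemma col_mem_Icc (hi : i ∈ Set.Icc 1 m) : L.col i ∈ Set.Icc 1 (L.col m) :=
  ⟨L.one_le_col hi, L.col_le_last hi⟩

lemma onGridPt_pos (hi : i ≤ m) : OnGridPt (L.col m) L.top (L.pos i) := by
  have hm := L.three_le
  rcases eq_or_ne i 0 with rfl | h0
  · have := L.three_le_col (by lia : 2 ≤ m) le_rfl
    have := L.row_lt_top 1 ⟨le_rfl, by lia⟩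
    have := L.three_le_row 1 ⟨le_rfl, by lia⟩
    rw [pos_zero]
    exact onGridPt_latticePoint ⟨by lia, by lia⟩ ⟨by lia, le_rfl⟩
  · have hi' : i ∈ Set.Icc 1 m := ⟨by lia, hi⟩
    have := L.row_lt_top i hi'
    have := L.three_le_row i hi'
    rw [pos_of_ne_zero L h0]
    exact onGridPt_latticePoint (L.col_mem_Icc hi') ⟨by lia, by lia⟩

lemma onGridPt_spoke (hi : i ∈ Set.Icc 1 m) (k : Fin 3) :
    OnGridPt (L.col m) L.top ((L.spoke i).pts k) := by
  have hcenter : (2 : ℤ) ∈ Set.Icc 1 (L.col m) := ⟨one_le_two, by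
    have := L.three_le_col (le_of_lt L.three_le) le_rfl
    lia⟩
  have := L.three_le_row i hi
  have := L.row_lt_top i hi
  fin_cases k
  · exact onGridPt_latticePoint hcenter (by grind)
  · exact onGridPt_latticePoint (L.col_mem_Icc hi) (by grind)
  · exact onGridPt_latticePoint (L.col_mem_Icc hi) (by grind)

lemma onGridPt_rim (hj : 1 ≤ j) (hjm : j < m) (k : Fin 4) :
    OnGridPt (L.col m) L.top ((L.rim j).pts k) := by
  have hl : j ∈ Set.Icc 1 m := ⟨hj, hjm.le⟩
  have hr : j + 1 ∈ Set.Icc 1 m := ⟨by lia, hjm⟩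
  have hbend : L.bend j ∈ Set.Icc 1 (L.col m) := Set.Icc_subset_Icc (L.one_le_col hl)
    (L.col_le_last hr) (L.bend_mem_Icc hj hjm)
  have := L.three_le_row j hl
  have := L.row_lt_top j hl
  have := L.three_le_row (j + 1) hr
  have := L.row_lt_top (j + 1) hr
  fin_cases k
  · exact onGridPt_latticePoint (L.col_mem_Icc hl) (by grind)
  · exact onGridPt_latticePoint hbend (by grind)
  · exact onGridPt_latticePoint hbend (by grind)
  · exact onGridPt_latticePoint (L.col_mem_Icc hr) (by grind)

lemma onGridPt_closing (k : Fin 4) : OnGridPt (L.col m) L.top (L.closing.pts k) := by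
  have hm := L.three_le
  have h1 : 1 ∈ Set.Icc 1 m := ⟨le_rfl, by lia⟩
  have hlast : m ∈ Set.Icc 1 m := ⟨by lia, le_rfl⟩
  have := L.three_le_row 1 h1
  have := L.row_lt_top 1 h1
  have := L.three_le_row m hlast
  have := L.row_lt_top m hlast
  fin_cases k
  · exact onGridPt_latticePoint (L.col_mem_Icc h1) (by grind)
  · exact onGridPt_latticePoint (L.col_mem_Icc h1) (by grind)
  · exact onGridPt_latticePoint (L.col_mem_Icc hlast) (by grind)
  · exact onGridPt_latticePoint (L.col_mem_Icc hlast) (by grind)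

lemma onGridPt_wheelPath {e : Sym2 ℕ} (he : IsWheelEdge m e) :
    ∀ k, OnGridPt (L.col m) L.top ((L.wheelPath e).pts k) := by
  cases he with
  | spoke i hi =>
    rw [wheelPath_spoke]
    exact L.onGridPt_spoke hi
  | rim j hj hjm =>
    rw [wheelPath_rim L hj]
    exact L.onGridPt_rim hj hjm
  | closing =>
    rw [wheelPath_closing]
    exact L.onGridPt_closing

lemma wheelPath_n_le (e : Sym2 ℕ) : (L.wheelPath e).n ≤ 3 := by
  unfold wheelPath
  split_ifs
  · exact Nat.le_succ 2
  · exact le_rfl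
  · exact le_rfl

/-- The simultaneous drawing given by a layout and a labelling of the vertices. -/
def drawing {V : Type} {W : SimpleGraph V} (M : SimpleGraph V) (idx : V ↪ ℕ)
    (hidx : ∀ v, idx v ≤ m) (hW : ∀ e ∈ W.edgeSet, IsWheelEdge m (e.map idx)) :
    SimDrawing ![W, M] where
  pos v := L.pos (idx v)
  pos_injective u v h := idx.injective (L.pos_injOn (hidx u) (hidx v) h)
  poly := ![fun e => L.wheelPath (e.map idx), fun e => L.matchPath (e.map idx)]
  joins := by
    refine Fin.forall_fin_two.2 ⟨fun a b hab => Sym2.eq_iff.1 ?_, fun a b _ => Sym2.eq_iff.1 ?_⟩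
    · exact L.ends_wheelPath (hW s(a, b) hab)
    · exact L.ends_matchPath s(idx a, idx b)

section Drawing

variable {V : Type} {W M : SimpleGraph V} {idx : V ↪ ℕ} (hidx : ∀ v, idx v ≤ m)
  (hW : ∀ e ∈ W.edgeSet, IsWheelEdge m (e.map idx))

lemma planarEach_drawing (hM : L.Fits (M.map idx)) : (L.drawing M idx hidx hW).PlanarEach := by
  have hmap {e e' : Sym2 V} (hne : e ≠ e') : e.map idx ≠ e'.map idx :=
    (Sym2.map.injective idx.injective).ne hne
  have hmem {e : Sym2 V} : e ∈ M.edgeSet → e.map idx ∈ (M.map idx).edgeSet :=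
    (SimpleGraph.Embedding.map idx M).map_mem_edgeSet_iff.2
  refine Fin.forall_fin_two.2 ⟨fun e he e' he' hne z hz => ?_, fun e he e' he' hne z hz => ?_⟩
  · obtain ⟨i, hi, hi', hz⟩ := L.meetInEnds_of_isWheelEdge (hW e he) (hW e' he') (hmap hne) hz
    obtain ⟨v, hv, rfl⟩ := Sym2.mem_map.1 hi
    obtain ⟨v', hv', hvv'⟩ := Sym2.mem_map.1 hi'
    exact ⟨v, hv, idx.injective hvv' ▸ hv', hz⟩
  · have := hM.disjoint_curve (hmem he) (hmem he') (hmap hne)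
    exact absurd hz.2 (Set.disjoint_left.1 this hz.1)

theorem isRacSim_drawing (hM : L.Fits (M.map idx)) : (L.drawing M idx hidx hW).IsRacSim :=
  SimDrawing.isRacSim_of_racPair (L.planarEach_drawing hidx hW hM) fun e he _ he' _ hs _ ht =>
    hM.racPair (hW e he) ((SimpleGraph.Embedding.map idx M).map_mem_edgeSet_iff.2 he') hs ht

theorem onGrid_drawing : (L.drawing M idx hidx hW).OnGrid (L.col m) L.top := by
  have hpos (v : V) := L.onGridPt_pos (hidx v)
  refine ⟨hpos, Fin.forall_fin_two.2 ⟨fun e he => L.onGridPt_wheelPath (hW e he), fun e _ k => ?_⟩⟩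
  induction e with | h a b =>
  fin_cases k
  · exact L.onGridPt_pos (inf_le_left.trans (hidx a))
  · exact L.onGridPt_pos (sup_le (hidx a) (hidx b))

end Drawing

end WheelLayout

/-- The column of rim vertex `i`: consecutive columns are at distance `2` and `1` alternately,
except that the last distance is always `2`. -/
def rimColumn (m i : ℕ) : ℤ :=
  if i = m then 3 * (m + 1) / 2 - 1 else 3 * i / 2

lemma rimColumn_lt_rimColumn {m i j : ℕ} (hij : i < j) (hj : j ≤ m) :
    rimColumn m i < rimColumn m j := by
  unfold rimColumn
  split_ifs <;> lia

lemma rimColumn_succ_cases {m j : ℕ} (hj : j < m) :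
    rimColumn m (j + 1) = rimColumn m j + 2 ∨
      (rimColumn m (j + 1) = rimColumn m j + 1 ∧ Even j ∧ j + 1 ≠ m) := by
  rw [Nat.even_iff]
  unfold rimColumn
  split_ifs <;> lia

/-- The row of vertex `i` when `σ i` is its partner: a matching edge gets the row of its endpoint
with the larger index. -/
def matchRow (m : ℕ) (σ : ℕ → ℕ) (i : ℕ) : ℤ :=
  m + 3 - max i (σ i)

/-- The column in which the rim edge from `j` to `j + 1` changes height: next to the column of its
lower endpoint. -/
def bendColumn (m : ℕ) (σ : ℕ → ℕ) (j : ℕ) : ℤ :=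
  if matchRow m σ (j + 1) ≤ matchRow m σ j then rimColumn m (j + 1) - 1 else rimColumn m j + 1

/-- The layout of the wheel for the matching whose edges are the pairs `i ≠ σ i`. -/
def matchingLayout {m : ℕ} (hm : 3 ≤ m) {σ : ℕ → ℕ} (hσ : ∀ i ≤ m, σ i ≤ m) : WheelLayout m where
  col := rimColumn m
  row := matchRow m σ
  bend := bendColumn m σ
  top := m + 3
  three_le := hm
  col_one := by simp [rimColumn, show 1 ≠ m by lia]
  three_le_col_two := by simp [rimColumn, show 2 ≠ m by lia]
  col_strictMonoOn _ _ _ hj hij := rimColumn_lt_rimColumn hij hj.2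
  three_le_row i hi := by
    have := hσ i hi.2
    have := hi.2
    unfold matchRow
    lia
  row_lt_top i hi := by
    have := hi.1
    unfold matchRow
    lia
  bend_cases j _ hjm := by
    have := rimColumn_succ_cases hjm
    unfold bendColumn
    split_ifs <;> lia
  bend_one := by
    have := rimColumn_succ_cases (by lia : 1 < m)
    have := Nat.not_even_one
    unfold bendColumn
    split_ifs <;> lia
  bend_last j hj := by
    subst hj
    have := rimColumn_succ_cases (Nat.lt_succ_self j)
    unfold bendColumn
    split_ifs <;> lia
  bend_ne j _ hjm := by
    have := rimColumn_succ_cases (by lia : j < m)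
    have := rimColumn_succ_cases hjm
    have := Nat.even_add_one (n := j)
    unfold bendColumn
    split_ifs <;> lia

open Classical in
/-- The neighbor of a vertex in a matching, or the vertex itself if it is unmatched. -/
noncomputable def partner {α : Type*} (N : SimpleGraph α) (i : α) : α :=
  if h : ∃ j, N.Adj i j then h.choose else i

/-- Every vertex has at most one neighbor. Unlike `IsMatchingGraph`, whose degrees are cardinalities
with value `0` on infinite sets, this makes sense for graphs that are not locally finite. -/
def UniqueNeighbors {α : Type*} (N : SimpleGraph α) : Prop :=
  ∀ ⦃i j k⦄, N.Adj i j → N.Adj i k → j = k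

lemma UniqueNeighbors.partner_eq {α : Type*} {N : SimpleGraph α} (hN : UniqueNeighbors N) {i j : α}
    (h : N.Adj i j) : partner N i = j := by
  have hex : ∃ j, N.Adj i j := ⟨j, h⟩
  rw [partner, dif_pos hex]
  exact hN hex.choose_spec h

lemma UniqueNeighbors.map {α β : Type*} {N : SimpleGraph α} (hN : UniqueNeighbors N) (f : α ↪ β) :
    UniqueNeighbors (N.map f) := by
  intro i j k hij hik
  obtain ⟨u, v, huv, rfl, rfl⟩ := (SimpleGraph.map_adj f N _ _).1 hij
  obtain ⟨u', w, huw, hu, rfl⟩ := (SimpleGraph.map_adj f N _ _).1 hik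
  rw [hN huv (f.injective hu ▸ huw)]

lemma partner_le {N : SimpleGraph ℕ} {m : ℕ} (hle : ∀ ⦃i j⦄, N.Adj i j → j ≤ m) {i : ℕ}
    (hi : i ≤ m) : partner N i ≤ m := by
  unfold partner
  split_ifs with h
  · exact hle h.choose_spec
  · exact hi

lemma fits_matchingLayout_partner {N : SimpleGraph ℕ} {m : ℕ} (hm : 3 ≤ m)
    (hN : UniqueNeighbors N) (hle : ∀ ⦃i j⦄, N.Adj i j → j ≤ m) (hzero : ∀ j, N.Adj 0 j → j = 1) :
    (matchingLayout hm fun _ => partner_le hle).Fits N where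
  le_of_adj h := hle h
  row_eq {i j} h := by
    simp only [matchingLayout, matchRow, hN.partner_eq h, hN.partner_eq h.symm, max_comm]
  edge_eq {i j k l} h h' hrow := by
    simp only [matchingLayout, matchRow, hN.partner_eq h.symm, hN.partner_eq h'.symm] at hrow
    obtain rfl | rfl | rfl | rfl : j = l ∨ j = k ∨ i = l ∨ i = k := by lia
    · rw [hN h.symm h'.symm]
    · rw [hN h.symm h', Sym2.eq_swap]
    · rw [hN h h'.symm, Sym2.eq_swap]
    · rw [hN h h']
  adj_zero {j} h := by
    obtain rfl := hzero j h
    refine ⟨rfl, ?_⟩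
    simp only [matchingLayout, matchRow, hN.partner_eq h.symm]
    lia

lemma uniqueNeighbors_of_isMatchingGraph {V : Type} [Finite V] {M : SimpleGraph V}
    (hM : IsMatchingGraph M) : UniqueNeighbors M :=
  fun i _ _ hj hk => (Set.ncard_le_one (Set.toFinite _)).1 (hM i) _ hj _ hk

lemma UniqueNeighbors.exists_ne_forall_adj_eq {α : Type*} [Nontrivial α] {N : SimpleGraph α}
    (hN : UniqueNeighbors N) (c : α) : ∃ w ≠ c, ∀ v, N.Adj c v → v = w := by
  by_cases h : ∃ w, N.Adj c w
  · obtain ⟨w, hw⟩ := h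
    exact ⟨w, hw.ne', fun v hv => hN hv hw⟩
  · obtain ⟨w, hw⟩ := exists_ne c
    exact ⟨w, hw, fun v hv => absurd ⟨v, hv⟩ h⟩

/-- The relabelling of the wheel with center `0` and rim cycle `1, …, m` that fixes the center and
rotates the rim so that `k` becomes `1`. -/
def rotateRim (m k j : ℕ) : ℕ :=
  if j = 0 then 0 else if k ≤ j then j - k + 1 else j + m - k + 1

lemma rotateRim_zero (m k : ℕ) : rotateRim m k 0 = 0 := if_pos rfl

lemma rotateRim_self {m k : ℕ} (hk : k ≠ 0) : rotateRim m k k = 1 := by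
  simp [rotateRim, hk]

lemma rotateRim_mem_Icc {m k j : ℕ} (hk : k ∈ Set.Icc 1 m) (hj : j ∈ Set.Icc 1 m) :
    rotateRim m k j ∈ Set.Icc 1 m := by
  rw [Set.mem_Icc] at *
  unfold rotateRim
  split_ifs <;> lia

lemma rotateRim_injOn {m k : ℕ} (hk : k ∈ Set.Icc 1 m) :
    Set.InjOn (rotateRim m k) (Set.Iic m) := by
  intro i hi j hj h
  rw [Set.mem_Icc] at hk
  rw [Set.mem_Iic] at hi hj
  unfold rotateRim at h
  split_ifs at h <;> lia

lemma rotateRim_le {m k j : ℕ} (hk : k ∈ Set.Icc 1 m) (hj : j ≤ m) : rotateRim m k j ≤ m := by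
  rcases Nat.eq_zero_or_pos j with rfl | hj0
  · exact (rotateRim_zero m k).trans_le (Nat.zero_le m)
  · exact (rotateRim_mem_Icc hk ⟨hj0, hj⟩).2

lemma isWheelEdge_map_rotateRim {m k : ℕ} (hk : k ∈ Set.Icc 1 m) {e : Sym2 ℕ}
    (he : IsWheelEdge m e) : IsWheelEdge m (e.map (rotateRim m k)) := by
  obtain ⟨hk1, hkm⟩ := hk
  cases he with
  | spoke i hi =>
    rw [Sym2.map_mk, rotateRim_zero]
    exact .spoke _ (rotateRim_mem_Icc ⟨hk1, hkm⟩ hi)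
  | rim j hj hjm =>
    rw [Sym2.map_mk]
    rcases eq_or_ne k (j + 1) with rfl | hkj
    · have hlast : rotateRim m (j + 1) j = m := by
        unfold rotateRim
        split_ifs <;> lia
      rw [rotateRim_self j.succ_ne_zero, hlast, Sym2.eq_swap]
      exact .closing
    · have hsucc : rotateRim m k (j + 1) = rotateRim m k j + 1 := by
        unfold rotateRim
        split_ifs <;> lia
      rw [hsucc]
      have := (rotateRim_mem_Icc ⟨hk1, hkm⟩ ⟨by lia, hjm⟩).2
      exact .rim _ (rotateRim_mem_Icc ⟨hk1, hkm⟩ ⟨hj, hjm.le⟩).1 (by lia)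
  | closing =>
    rw [Sym2.map_mk]
    rcases hk1.eq_or_lt with rfl | hk1
    · have hlast : rotateRim m 1 m = m := by
        unfold rotateRim
        split_ifs <;> lia
      rw [rotateRim_self one_ne_zero, hlast]
      exact .closing
    · have hsucc : rotateRim m k 1 = rotateRim m k m + 1 := by
        unfold rotateRim
        split_ifs <;> lia
      rw [hsucc, Sym2.eq_swap]
      have := (rotateRim_mem_Icc ⟨hk1.le, hkm⟩ ⟨le_rfl, by lia⟩ : rotateRim m k 1 ∈ _).2
      exact .rim _ (rotateRim_mem_Icc ⟨hk1.le, hkm⟩ ⟨by lia, le_rfl⟩).1 (by lia)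

lemma isWheelEdge_of_adj {V : Type} {W : SimpleGraph V} {m : ℕ} {f : Fin (m + 1) ≃ V}
    (hf : ∀ a b : Fin (m + 1), W.Adj (f a) (f b) ↔
      (a.val = 0 ∧ b.val ≠ 0) ∨ (b.val = 0 ∧ a.val ≠ 0) ∨
      (a.val ≠ 0 ∧ b.val ≠ 0 ∧ RimAdj (m + 1) a b))
    {u v : V} (huv : W.Adj u v) : IsWheelEdge m s((f.symm u).val, (f.symm v).val) := by
  have := (f.symm u).is_le
  have := (f.symm v).is_le
  rw [← f.apply_symm_apply u, ← f.apply_symm_apply v, hf] at huv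
  rcases huv with ⟨hu, hv⟩ | ⟨hv, hu⟩ | ⟨hu, hv, (hvu | huv) | ⟨hu1, hvm⟩ | ⟨hv1, hum⟩⟩
  · rw [hu]
    exact .spoke _ ⟨by lia, by lia⟩
  · rw [hv, Sym2.eq_swap]
    exact .spoke _ ⟨by lia, by lia⟩
  · rw [hvu]
    exact .rim _ (by lia) (by lia)
  · rw [huv, Sym2.eq_swap]
    exact .rim _ (by lia) (by lia)
  · rw [hu1, hvm]
    exact .closing
  · rw [hv1, hum, Sym2.eq_swap]
    exact .closing

lemma exists_labelling_of_isWheel {V : Type} {W : SimpleGraph V} {m : ℕ} (hW : IsWheel (m + 1) W) :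
    ∃ c, ∀ w ≠ c, ∃ idx : V ↪ ℕ, (∀ v, idx v ≤ m) ∧ idx c = 0 ∧ idx w = 1 ∧
      ∀ e ∈ W.edgeSet, IsWheelEdge m (e.map idx) := by
  obtain ⟨f, hf⟩ := hW
  refine ⟨f 0, fun w hw => ?_⟩
  set k : ℕ := (f.symm w).val
  have hk0 : k ≠ 0 := fun h => hw (f.symm_apply_eq.1 (Fin.ext h))
  have hk : k ∈ Set.Icc 1 m := ⟨Nat.one_le_iff_ne_zero.2 hk0, (f.symm w).is_le⟩
  let idx : V ↪ ℕ := ⟨fun v => rotateRim m k (f.symm v), fun u v h => f.symm.injective <|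
    Fin.ext <| rotateRim_injOn hk (f.symm u).is_le (f.symm v).is_le h⟩
  refine ⟨idx, fun v => rotateRim_le hk (f.symm v).is_le, ?_, rotateRim_self hk0, fun e he => ?_⟩
  · exact (congrArg (rotateRim m k ·.val) (f.symm_apply_apply 0)).trans (rotateRim_zero m k)
  · induction e with | h u v =>
    exact isWheelEdge_map_rotateRim hk (isWheelEdge_of_adj hf he)

/-- A wheel and a matching on a common set of `n ≥ 4` vertices admit a RacSim
drawing on an integer grid of size `(⌊3n/2⌋ - 1) × (n + 2)` with at most two bends
per wheel edge and no bends (a single straight-line segment) per matching edge. -/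
theorem racsim_wheel_matching {V : Type} [Fintype V] (n : ℕ)
    (hcard : Fintype.card V = n) (hn : 4 ≤ n) (W M : SimpleGraph V)
    (hW : IsWheel n W) (hM : IsMatchingGraph M) :
    ∃ D : SimDrawing ![W, M], D.IsRacSim ∧
      D.OnGrid (((3 * n / 2 : ℕ) : ℤ) - 1) ((n : ℤ) + 2) ∧
      D.BendsAtMost 0 2 ∧
      ∀ e ∈ M.edgeSet, (D.poly 1 e).n = 1 := by
  obtain ⟨m, rfl⟩ : ∃ m, n = m + 1 := ⟨n - 1, by lia⟩
  have hm : 3 ≤ m := by lia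
  have : Nontrivial V := Fintype.one_lt_card_iff_nontrivial.1 (by lia)
  have hM' : UniqueNeighbors M := uniqueNeighbors_of_isMatchingGraph hM
  obtain ⟨c, hc⟩ := exists_labelling_of_isWheel hW
  obtain ⟨w, hwc, hw⟩ := hM'.exists_ne_forall_adj_eq c
  obtain ⟨idx, hidx, hidx_c, hidx_w, hedge⟩ := hc w hwc
  have hle : ∀ ⦃i j⦄, (M.map idx).Adj i j → j ≤ m := by
    rintro _ _ ⟨-, u, v, -, -, rfl⟩
    exact hidx v
  have hzero : ∀ j, (M.map idx).Adj 0 j → j = 1 := by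
    rintro _ ⟨-, u, v, huv, hu, rfl⟩
    obtain rfl : u = c := idx.injective (hu.trans hidx_c.symm)
    rw [hw v huv, hidx_w]
  let L := matchingLayout hm fun _ => partner_le hle
  have hfits : L.Fits (M.map idx) := fits_matchingLayout_partner hm (hM'.map idx) hle hzero
  have hwidth : L.col m = ((3 * (m + 1) / 2 : ℕ) : ℤ) - 1 := by simp [L, matchingLayout, rimColumn]
  have htop : L.top = ((m + 1 : ℕ) : ℤ) + 2 := by
    simp only [L, matchingLayout, Nat.cast_succ, add_assoc, Int.reduceAdd]
  refine ⟨L.drawing M idx hidx hedge, L.isRacSim_drawing hidx hedge hfits, ?_,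
    fun e _ => L.wheelPath_n_le (e.map idx), fun _ _ => rfl⟩
  rw [← hwidth, ← htop]
  exact L.onGrid_drawing hidx hedge
end

section
/- Let Z be a maximal outerpath on vertices v₁,…,vₙ with n ≥ 4, labeled so that its two vertices of degree 2 are v₁ and v_j for some j with 2 < j < n. Then the spanning subgraph of Z obtained by deleting the edges of the upper path v₁→v₂→⋯→v_j and of the lower path v_{j+1}→v_{j+2}→⋯→vₙ is a caterpillar that spans all of v₁,…,vₙ, and consecutive spine vertices of this caterpillar alternate between the vertex set {v₁,…,v_j} of the upper path and the vertex set {v_{j+1},…,vₙ} of the lower path. -/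
open SimpleGraph

/-- A graph is a (possibly empty) path: either it has no vertices, or it is
connected, has maximum degree at most 2, and has a vertex of degree at most 1
(which rules out cycles). -/
def IsPathOrEmptyGraph {W : Type} (H : SimpleGraph W) : Prop :=
  IsEmpty W ∨ (H.Connected ∧ (∀ v : W, vdeg H v ≤ 2) ∧ ∃ v : W, vdeg H v ≤ 1)

/-- A caterpillar: a tree in which deleting all leaves (vertices of degree 1)
yields a (possibly empty) path, called the spine. -/
def IsCaterpillar {V : Type} (G : SimpleGraph V) : Prop :=
  G.IsTree ∧ IsPathOrEmptyGraph (G.induce {v : V | vdeg G v ≠ 1})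

/-- Adjacency along the Hamiltonian cycle `0 → 1 → ⋯ → (n-1) → 0` on `Fin n`. -/
def CycAdj (n : ℕ) (a b : Fin n) : Prop :=
  b.val = (a.val + 1) % n ∨ a.val = (b.val + 1) % n

/-- The cyclic position of `x` relative to `a` on `Fin n`. -/
def RelPos (n : ℕ) (a x : Fin n) : ℕ := (x.val + n - a.val) % n

/-- `x` lies strictly between `a` and `b` in the cyclic order of `Fin n`. -/
def CyclicBtw (n : ℕ) (a x b : Fin n) : Prop :=
  RelPos n a x ≠ 0 ∧ RelPos n a x < RelPos n a b

/-- Chords `{a, b}` and `{c, d}` (with pairwise distinct endpoints) cross: exactly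
one of `c`, `d` lies strictly between `a` and `b` in the cyclic order. -/
def ChordsCross (n : ℕ) (a b c d : Fin n) : Prop :=
  (CyclicBtw n a c b ∧ ¬CyclicBtw n a d b) ∨ (CyclicBtw n a d b ∧ ¬CyclicBtw n a c b)

/-- A maximal outerpath on `Fin n`: the edge set consists of the Hamiltonian cycle
`0 → 1 → ⋯ → (n-1) → 0` together with `n - 3` chords (so `2n - 3` edges in total)
that are pairwise noncrossing with respect to the cyclic order (a triangulated
polygon), and there are exactly two vertices of degree 2. -/
def IsMaximalOuterpath {n : ℕ} (H : SimpleGraph (Fin n)) : Prop :=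
  (∀ a b : Fin n, a ≠ b → CycAdj n a b → H.Adj a b) ∧
  H.edgeSet.ncard = 2 * n - 3 ∧
  (∀ a b c d : Fin n, H.Adj a b → H.Adj c d → ¬CycAdj n a b → ¬CycAdj n c d →
    a ≠ c → a ≠ d → b ≠ c → b ≠ d → ¬ChordsCross n a b c d) ∧
  {v : Fin n | vdeg H v = 2}.ncard = 2

/-- An outerpath on a vertex set `V` of `n` vertices: a spanning subgraph of a
maximal outerpath, under some labeling of the vertices by `Fin n`. -/
def IsOuterpath {V : Type} (n : ℕ) (Z : SimpleGraph V) : Prop :=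
  ∃ (f : Fin n ≃ V) (H : SimpleGraph (Fin n)), IsMaximalOuterpath H ∧
    ∀ a b : Fin n, Z.Adj (f a) (f b) → H.Adj a b

/-!
Between the endpoints of a chord there is a vertex of degree 2: the triangulation has an ear there.
Since the only such vertices are `0` and `k`, every edge that is not on the Hamiltonian path
`0 → 1 → ⋯ → n - 1` separates `0` from `k`, so every edge that survives the deletion joins the
upper to the lower path. As edges do not cross, the surviving graph is acyclic: on a cycle, let `u`
be the last upper vertex and `x` the nearer of its two neighbours; the edge from `x` to its other
neighbour on the cycle crosses the other edge at `u`. At most `n - 2` of the `2n - 3` edges are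
deleted, so the acyclic graph has at least `n - 1` edges and is a tree. Finally, of three neighbours
of one vertex the middle one is a leaf, for any further edge there would cross an outer one;
hence spine vertices have at most two spine neighbours.
-/

section Trees

variable {V : Type} {G : SimpleGraph V}

/-- The spine of a caterpillar: the graph that remains after deleting all leaves. -/
abbrev spine (G : SimpleGraph V) : SimpleGraph {v : V | vdeg G v ≠ 1} :=
  G.induce {v : V | vdeg G v ≠ 1}

theorem vdeg_ne_one_of_mem_support {a b v : V} {p : G.Walk a b} (hp : p.IsPath)
    (ha : vdeg G a ≠ 1) (hb : vdeg G b ≠ 1) (hv : v ∈ p.support) : vdeg G v ≠ 1 := by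
  obtain ⟨i, rfl, hi⟩ := Walk.mem_support_iff_exists_getVert.mp hv
  rcases eq_or_ne i 0 with rfl | hi0
  · simpa only [Walk.getVert_zero] using ha
  rcases hi.eq_or_lt with rfl | hi
  · simpa only [Walk.getVert_length] using hb
  intro hone
  have hle : (p.toSubgraph.neighborSet (p.getVert i)).ncard ≤ vdeg G (p.getVert i) :=
    Set.ncard_le_ncard (p.toSubgraph.neighborSet_subset _)
      (Set.finite_of_ncard_ne_zero (hone.trans_ne one_ne_zero))
  rw [hp.ncard_neighborSet_toSubgraph_internal_eq_two hi0 hi, hone] at hle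
  omega

theorem preconnected_spine (hG : G.Preconnected) : (spine G).Preconnected := by
  rintro ⟨a, ha⟩ ⟨b, hb⟩
  obtain ⟨p, hp⟩ := (hG a b).exists_isPath
  exact ⟨p.induce _ fun _ hv => vdeg_ne_one_of_mem_support hp ha hb hv⟩

theorem exists_vdeg_le_one_of_isTree [Finite V] (hG : G.IsTree) : ∃ v, vdeg G v ≤ 1 := by
  classical
  have : Fintype V := Fintype.ofFinite V
  rcases subsingleton_or_nontrivial V with _ | _
  · obtain ⟨v⟩ := hG.connected.nonempty
    exact ⟨v, Set.ncard_le_one_of_subsingleton _⟩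
  · obtain ⟨v, hv⟩ := hG.exists_vert_degree_one_of_nontrivial
    refine ⟨v, ?_⟩
    rw [vdeg, ← Nat.card_coe_set_eq, Nat.card_eq_fintype_card, card_neighborSet_eq_degree, hv]

theorem isCaterpillar_of_isTree [Finite V] (hG : G.IsTree)
    (hdeg : ∀ v, vdeg (spine G) v ≤ 2) : IsCaterpillar G := by
  refine ⟨hG, ?_⟩
  rcases isEmpty_or_nonempty {v : V | vdeg G v ≠ 1} with hempty | _
  · exact Or.inl hempty
  · have hconn : (spine G).Connected := ⟨preconnected_spine hG.connected.preconnected⟩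
    exact Or.inr ⟨hconn, hdeg, exists_vdeg_le_one_of_isTree ⟨hconn, hG.isAcyclic.induce _⟩⟩

end Trees

theorem isTree_of_isAcyclic_of_card_le {V : Type*} [Finite V] [Nonempty V] {G : SimpleGraph V}
    (hG : G.IsAcyclic) (hcard : Nat.card V ≤ G.edgeSet.ncard + 1) : G.IsTree := by
  obtain ⟨T, hGT, -, hT⟩ := connected_top.exists_isTree_le_of_le_of_isAcyclic le_top hG
  have hTcard : T.edgeSet.ncard + 1 = Nat.card V := by
    simpa only [Nat.card_coe_set_eq] using (isTree_iff_connected_and_card.mp hT).2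
  have hedges : G.edgeSet = T.edgeSet :=
    Set.eq_of_subset_of_ncard_le (edgeSet_subset_edgeSet.mpr hGT) (by omega)
  rwa [edgeSet_inj.mp hedges]

theorem ncard_le_two_of_forall_not_lt_lt {α : Type*} [LinearOrder α] {s : Set α}
    (hs : ∀ x ∈ s, ∀ y ∈ s, ∀ z ∈ s, x < y → ¬ y < z) : s.ncard ≤ 2 := by
  by_contra! htwo
  obtain ⟨x, y, z, hx, hy, hz, hxy, hxz, hyz⟩ :=
    (Set.two_lt_ncard_iff (Set.finite_of_ncard_pos (by omega))).mp htwo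
  rcases hxy.lt_or_gt with _ | _ <;> rcases hxz.lt_or_gt with _ | _ <;>
    rcases hyz.lt_or_gt with _ | _ <;> grind

/-- No two edges interleave in the linear order of the vertices. With the vertices placed on a
circle in this order, and the edges drawn as straight segments, this says that no two edges
cross. -/
def IsNoncrossing {V : Type*} [LinearOrder V] (G : SimpleGraph V) : Prop :=
  ∀ ⦃a b c d : V⦄, a < b → b < c → c < d → G.Adj a c → ¬ G.Adj b d

namespace IsNoncrossing

section Acyclic

variable {V : Type*} [LinearOrder V] {G H : SimpleGraph V} {k : V}

theorem anti (hGH : G ≤ H) (hH : IsNoncrossing H) : IsNoncrossing G :=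
  fun _ _ _ _ hab hbc hcd hac hbd => hH hab hbc hcd (hGH hac) (hGH hbd)

theorem le_of_adj_of_lt (hG : IsNoncrossing G)
    (hbip : G.IsBipartiteWith (Set.Iic k) (Set.Ioi k)) {a b c d : V} (hab : G.Adj a b)
    (hcd : G.Adj c d) (hside : a ≤ k ↔ c ≤ k) (hac : a < c) : d ≤ b := by
  by_contra! hbd
  rcases hbip.mem_of_adj hab with ⟨ha, hb⟩ | ⟨ha, -⟩
  · exact hG hac ((hside.mp ha).trans_lt hb) hbd hab hcd
  · have hd : d ≤ k := hbip.symm.mem_of_mem_adj (not_le.mp (mt hside.mpr (not_le.mpr ha))) hcd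
    exact hG hbd (hd.trans_lt ha) hac hab.symm hcd.symm

theorem isAcyclic (hG : IsNoncrossing G)
    (hbip : G.IsBipartiteWith (Set.Iic k) (Set.Ioi k)) : G.IsAcyclic := by
  intro v p hp
  obtain ⟨u, ⟨hu, huk⟩, hmax⟩ : ∃ u, Maximal (fun u => u ∈ p.support ∧ u ≤ k) u := by
    refine (p.support.finite_toSet.inter_of_left (Set.Iic k)).exists_maximal ?_
    rcases hbip.mem_of_adj (p.adj_snd hp.not_nil) with ⟨hv, -⟩ | ⟨-, hsnd⟩
    · exact ⟨v, p.start_mem_support, hv⟩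
    · exact ⟨p.snd, p.getVert_mem_support 1, hsnd⟩
  obtain ⟨x, y, hxy, hux, huy⟩ :
      ∃ x y, x < y ∧ p.toSubgraph.Adj u x ∧ p.toSubgraph.Adj u y := by
    obtain ⟨x, y, hne, hnbrs⟩ :=
      Set.ncard_eq_two.mp (hp.ncard_neighborSet_toSubgraph_eq_two hu)
    have hux : x ∈ p.toSubgraph.neighborSet u := by simp [hnbrs]
    have huy : y ∈ p.toSubgraph.neighborSet u := by simp [hnbrs]
    rcases hne.lt_or_gt with hlt | hlt
    · exact ⟨x, y, hlt, hux, huy⟩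
    · exact ⟨y, x, hlt, huy, hux⟩
  obtain ⟨w, hxw : p.toSubgraph.Adj x w, hwu⟩ :
      ∃ w ∈ p.toSubgraph.neighborSet x, w ≠ u := by
    refine Set.exists_ne_of_one_lt_ncard ?_ u
    rw [hp.ncard_neighborSet_toSubgraph_eq_two (p.mem_verts_toSubgraph.mp hux.snd_mem)]
    exact one_lt_two
  have hwk : w ≤ k := hbip.symm.mem_of_mem_adj (hbip.mem_of_mem_adj huk hux.adj_sub) hxw.adj_sub
  have hwltu : w < u := ((le_total w u).elim id
    (hmax ⟨p.mem_verts_toSubgraph.mp hxw.snd_mem, hwk⟩)).lt_of_ne hwu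
  exact hxy.not_ge (hG.le_of_adj_of_lt hbip hxw.adj_sub.symm huy.adj_sub (by tauto) hwltu)

end Acyclic

section Degrees

variable {V : Type} [LinearOrder V] {G H : SimpleGraph V} {k : V}

theorem vdeg_eq_one_of_middle_neighbor (hG : IsNoncrossing G)
    (hbip : G.IsBipartiteWith (Set.Iic k) (Set.Ioi k)) {u x y z : V} (hux : G.Adj u x)
    (huy : G.Adj u y) (huz : G.Adj u z) (hxy : x < y) (hyz : y < z) : vdeg G y = 1 := by
  refine Set.ncard_eq_one.mpr ⟨u, Set.eq_singleton_iff_unique_mem.mpr ⟨huy.symm, ?_⟩⟩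
  intro w hyw
  have hside : w ≤ k ↔ u ≤ k := by
    have huy_sides := hbip.mem_of_adj huy
    have hyw_sides := hbip.mem_of_adj hyw
    grind
  rcases lt_trichotomy w u with hwu | rfl | huw
  · exact absurd (hG.le_of_adj_of_lt hbip hyw.symm huz hside hwu) hyz.not_ge
  · rfl
  · exact absurd (hG.le_of_adj_of_lt hbip hux hyw.symm hside.symm huw) hxy.not_ge

theorem vdeg_spine_le_two (hG : IsNoncrossing G)
    (hbip : G.IsBipartiteWith (Set.Iic k) (Set.Ioi k)) (u : {v : V | vdeg G v ≠ 1}) :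
    vdeg (spine G) u ≤ 2 :=
  ncard_le_two_of_forall_not_lt_lt fun _ hux y huy _ huz hxy hyz =>
    y.2 (hG.vdeg_eq_one_of_middle_neighbor hbip hux huy huz hxy hyz)

theorem isCaterpillar [Finite V] (hG : IsNoncrossing G)
    (hbip : G.IsBipartiteWith (Set.Iic k) (Set.Ioi k))
    (hcard : Nat.card V ≤ G.edgeSet.ncard + 1) : IsCaterpillar G :=
  have : Nonempty V := ⟨k⟩
  isCaterpillar_of_isTree (isTree_of_isAcyclic_of_card_le (hG.isAcyclic hbip) hcard)
    (hG.vdeg_spine_le_two hbip)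

theorem exists_vdeg_eq_two_of_not_covBy [SuccOrder V] [WellFoundedGT V] (hH : IsNoncrossing H)
    (hpath : hasse V ≤ H) {a b : V} (hab : a < b) (hcov : ¬ a ⋖ b) (hadj : H.Adj a b) :
    ∃ x, a < x ∧ x < b ∧ vdeg H x = 2 := by
  induction a using WellFoundedGT.induction generalizing b with
  | _ a ih =>
  obtain ⟨x, hax⟩ : ∃ x, a ⋖ x := ⟨_, Order.covBy_succ_of_not_isMax hab.not_isMax⟩
  have hxb : x < b := hax.ge_of_gt hab |>.lt_of_ne (by rintro rfl; exact hcov hax)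
  obtain ⟨z, hxz⟩ : ∃ z, x ⋖ z := ⟨_, Order.covBy_succ_of_not_isMax hxb.not_isMax⟩
  by_cases hchord : ∃ y, H.Adj x y ∧ y ≠ a ∧ y ≠ z
  · obtain ⟨y, hxy, hya, hyz⟩ := hchord
    have hay : a < y := hya.lt_or_gt.resolve_left fun h => hH h hax.lt hxb hxy.symm hadj
    have hyb : y ≤ b := not_lt.mp fun h => hH hax.lt hxb h hadj hxy
    have hlt : x < y := (hax.ge_of_gt hay).lt_of_ne hxy.ne
    obtain ⟨w, hxw, hwy, hw⟩ := ih x hax.lt hlt (fun h => hyz (h.unique_right hxz)) hxy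
    exact ⟨w, hax.lt.trans hxw, hwy.trans_le hyb, hw⟩
  · push Not at hchord
    refine ⟨x, hax.lt, hxb, Set.ncard_eq_two.mpr ⟨a, z, (hax.lt.trans hxz.lt).ne, ?_⟩⟩
    refine Set.Subset.antisymm (fun y hy => or_iff_not_imp_left.mpr (hchord y hy)) ?_
    rintro y (rfl | rfl)
    · exact hpath (Or.inr hax)
    · exact hpath (Or.inl hxz)

end Degrees

end IsNoncrossing

section SidePaths

variable {V : Type*} [LinearOrder V] {H : SimpleGraph V} {k : V}

/-- The edges of the upper path (from the first vertex to `k`) and of the lower path (from the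
successor of `k` to the last vertex). -/
def sidePathEdges (k : V) : Set (Sym2 V) :=
  {e | ∃ a b, e = s(a, b) ∧ a ⋖ b ∧ (b ≤ k ∨ k < a)}

theorem ncard_sidePathEdges_add_two_le [Finite V] (hk : ¬ IsMax k) :
    (sidePathEdges k).ncard + 2 ≤ Nat.card V := by
  have : Nonempty V := ⟨k⟩
  let _ : SuccOrder V := SuccOrder.ofLinearWellFoundedLT V
  obtain ⟨m, hm⟩ := Finite.exists_max (id : V → V)
  have hkm : k ≠ m := by
    rintro rfl
    exact hk fun v _ => hm v
  have hsub : sidePathEdges k ⊆ (fun a => s(a, Order.succ a)) '' {k, m}ᶜ := by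
    rintro _ ⟨a, b, rfl, hab, hside⟩
    refine ⟨a, ?_, by simp only [hab.succ_eq]⟩
    rintro (rfl | rfl)
    · exact hside.elim hab.lt.not_ge (lt_irrefl a)
    · exact hab.lt.not_ge (hm b)
  calc
    (sidePathEdges k).ncard + 2 ≤ ({k, m}ᶜ : Set V).ncard + ({k, m} : Set V).ncard := by
      rw [Set.ncard_pair hkm]
      exact Nat.add_le_add_right ((Set.ncard_le_ncard hsub).trans Set.ncard_image_le) 2
    _ = Nat.card V := by rw [add_comm, Set.ncard_add_ncard_compl]

theorem card_le_ncard_edgeSet_deleteEdges_sidePathEdges [Finite V] (hk : ¬ IsMax k)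
    (hcard : 2 * Nat.card V ≤ H.edgeSet.ncard + 3) :
    Nat.card V ≤ (H.deleteEdges (sidePathEdges k)).edgeSet.ncard + 1 := by
  have hdeleted := ncard_sidePathEdges_add_two_le hk
  have hsplit := Set.ncard_le_ncard_sdiff_add_ncard H.edgeSet (sidePathEdges k)
  rw [edgeSet_deleteEdges]
  omega

end SidePaths

theorem isBipartiteWith_deleteEdges_sidePathEdges {V : Type} [LinearOrder V] [SuccOrder V]
    [WellFoundedGT V] {H : SimpleGraph V} {k : V} (hH : IsNoncrossing H)
    (hpath : hasse V ≤ H) (hdeg : ∀ v, vdeg H v = 2 → IsMin v ∨ v = k) :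
    (H.deleteEdges (sidePathEdges k)).IsBipartiteWith (Set.Iic k) (Set.Ioi k) := by
  have hacross {a b : V} (hab : a < b) (hadj : (H.deleteEdges (sidePathEdges k)).Adj a b) :
      a ≤ k ∧ k < b := by
    obtain ⟨hadj, hkept⟩ := deleteEdges_adj.mp hadj
    by_cases hcov : a ⋖ b
    · by_contra! hside
      exact hkept ⟨a, b, rfl, hcov, by grind⟩
    · obtain ⟨x, hax, hxb, hx⟩ := hH.exists_vdeg_eq_two_of_not_covBy hpath hab hcov hadj
      obtain rfl := (hdeg x hx).resolve_left hax.not_isMin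
      exact ⟨hax.le, hxb⟩
  refine ⟨Set.Iic_disjoint_Ioi le_rfl, fun a b hadj => ?_⟩
  rcases hadj.ne.lt_or_gt with hab | hba
  · exact Or.inl (hacross hab hadj)
  · exact Or.inr (hacross hba hadj.symm).symm

section Polygon

variable {n : ℕ}

theorem not_cycAdj_of_add_one_lt {a b : Fin n} (hab : a.val + 1 < b.val)
    (hne : 0 < a.val ∨ b.val + 1 < n) : ¬ CycAdj n a b := by
  rintro (hsucc | hsucc)
  · rw [Nat.mod_eq_of_lt (by omega)] at hsucc
    omega
  · rcases (show b.val + 1 ≤ n from b.isLt).lt_or_eq with hlt | hlast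
    · rw [Nat.mod_eq_of_lt hlt] at hsucc
      omega
    · rw [hlast, Nat.mod_self] at hsucc
      omega

theorem relPos_eq_sub {a x : Fin n} (hax : a ≤ x) : RelPos n a x = x.val - a.val := by
  rw [RelPos, Nat.sub_add_comm hax, Nat.add_mod_right, Nat.mod_eq_of_lt (by omega)]

theorem chordsCross_of_lt {a b c d : Fin n} (hab : a < b) (hbc : b < c) (hcd : c < d) :
    ChordsCross n a c b d := by
  left
  rw [CyclicBtw, CyclicBtw, relPos_eq_sub hab.le, relPos_eq_sub (hab.trans hbc).le,
    relPos_eq_sub (hab.trans (hbc.trans hcd)).le]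
  omega

theorem setOf_pathEdge_eq_sidePathEdges (k : Fin n) :
    {e : Sym2 (Fin n) | ∃ a b : Fin n, e = s(a, b) ∧
      (b.val = a.val + 1 ∨ a.val = b.val + 1) ∧
      ((a.val ≤ k.val ∧ b.val ≤ k.val) ∨ (k.val < a.val ∧ k.val < b.val))} =
    sidePathEdges k := by
  ext e
  constructor
  · rintro ⟨a, b, rfl, hab | hba, hside⟩
    · exact ⟨a, b, rfl, by simp [hab], by omega⟩
    · exact ⟨b, a, Sym2.eq_swap, by simp [hba], by omega⟩
  · rintro ⟨a, b, rfl, hab, hside⟩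
    have hval : a.val + 1 = b.val := by simpa using hab
    exact ⟨a, b, rfl, by omega, by omega⟩

end Polygon

namespace IsMaximalOuterpath

variable {n : ℕ} {H : SimpleGraph (Fin n)}

theorem hasse_le (hH : IsMaximalOuterpath H) : hasse (Fin n) ≤ H := by
  have hadj {a b : Fin n} (hab : a ⋖ b) : H.Adj a b := by
    have hval : a.val + 1 = b.val := by simpa using hab
    exact hH.1 a b hab.ne (Or.inl (by rw [hval, Nat.mod_eq_of_lt b.isLt]))
  rintro a b (hab | hba)
  · exact hadj hab
  · exact (hadj hba).symm

theorem isNoncrossing (hH : IsMaximalOuterpath H) : IsNoncrossing H := by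
  intro a b c d hab hbc hcd hac hbd
  exact hH.2.2.1 a c b d hac hbd (not_cycAdj_of_add_one_lt (by omega) (by omega))
    (not_cycAdj_of_add_one_lt (by omega) (by omega)) hab.ne (hab.trans (hbc.trans hcd)).ne
    hbc.ne' hcd.ne (chordsCross_of_lt hab hbc hcd)

theorem isMin_or_eq_of_vdeg_eq_two (hH : IsMaximalOuterpath H) {u k v : Fin n} (hu : IsMin u)
    (huk : u ≠ k) (hdegu : vdeg H u = 2) (hdegk : vdeg H k = 2) (hv : vdeg H v = 2) :
    IsMin v ∨ v = k := by
  have hpair : {u, k} = {v : Fin n | vdeg H v = 2} := by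
    refine Set.eq_of_subset_of_ncard_le ?_ (by rw [hH.2.2.2, Set.ncard_pair huk])
    rintro v (rfl | rfl)
    exacts [hdegu, hdegk]
  obtain rfl | rfl : v ∈ ({u, k} : Set (Fin n)) := hpair ▸ hv
  exacts [Or.inl hu, Or.inr rfl]

end IsMaximalOuterpath

/-- Let `H` be a maximal outerpath on `Fin n` (`n ≥ 4`), labeled so that its two
degree-2 vertices are the vertex `0` and a vertex `k` with `2 ≤ k ≤ n - 2`
(in 1-based notation: `v₁` and `v_j` with `2 < j < n`). Deleting the edges of the
upper path `0 → 1 → ⋯ → k` and of the lower path `(k+1) → (k+2) → ⋯ → (n-1)`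
yields a spanning caterpillar whose consecutive spine vertices (adjacent non-leaf
vertices) alternate between the upper-path vertex set `{0, …, k}` and the
lower-path vertex set `{k+1, …, n-1}`. -/
theorem maximal_outerpath_spanning_caterpillar (n : ℕ) (hn : 4 ≤ n)
    (H : SimpleGraph (Fin n)) (hH : IsMaximalOuterpath H) (k : Fin n)
    (hk1 : 2 ≤ k.val) (hk2 : k.val ≤ n - 2)
    (hdeg0 : ∀ v : Fin n, v.val = 0 → vdeg H v = 2) (hdegk : vdeg H k = 2)
    (C : SimpleGraph (Fin n))
    (hC : C = H.deleteEdges {e : Sym2 (Fin n) | ∃ a b : Fin n, e = s(a, b) ∧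
      (b.val = a.val + 1 ∨ a.val = b.val + 1) ∧
      ((a.val ≤ k.val ∧ b.val ≤ k.val) ∨ (k.val < a.val ∧ k.val < b.val))}) :
    IsCaterpillar C ∧
      ∀ a b : Fin n, C.Adj a b → vdeg C a ≠ 1 → vdeg C b ≠ 1 →
        (a.val ≤ k.val ↔ ¬(b.val ≤ k.val)) := by
  rw [setOf_pathEdge_eq_sidePathEdges] at hC
  subst hC
  have hmin : IsMin (⟨0, by omega⟩ : Fin n) := fun _ _ => Nat.zero_le _
  have hnotmax : ¬ IsMax k := fun hmax => by
    have hlast : n - 1 ≤ k.val := hmax.isTop ⟨n - 1, by omega⟩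
    omega
  have hne : (⟨0, by omega⟩ : Fin n) ≠ k := Fin.ne_of_val_ne (by simp only; omega)
  have hedges : 2 * Nat.card (Fin n) ≤ H.edgeSet.ncard + 3 := by
    rw [hH.2.1, Nat.card_fin]
    omega
  have hbip := isBipartiteWith_deleteEdges_sidePathEdges hH.isNoncrossing hH.hasse_le
    fun _ => hH.isMin_or_eq_of_vdeg_eq_two hmin hne (hdeg0 _ rfl) hdegk
  refine ⟨(hH.isNoncrossing.anti (H.deleteEdges_le _)).isCaterpillar hbip
    (card_le_ncard_edgeSet_deleteEdges_sidePathEdges hnotmax hedges), fun a b hab _ _ => ?_⟩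
  have hsides := hbip.mem_of_adj hab
  grind
end
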